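/- arXiv:0905.0488 — 4 statements merged into one kernel-verified Lean document; each statement's English description precedes it below -/
import Mathlib

section
/- Let K be a field, (R, 𝔪) a parameter K-algebra, and V an arbitrary K-module. Let M := lim_i ((R/𝔪^{i+1}) ⊗_K V) be the 𝔪-adic completion of R ⊗_K V. Then M is flat as an R-module and 𝔪-adically complete, and for every i ≥ 0 the canonical (R/𝔪^{i+1})-linear map (R/𝔪^{i+1}) ⊗_K V → (R/𝔪^{i+1}) ⊗_R M is bijective. -/
/-!
Over a field `V` is free, so `F = R ⊗ V` is a free `R`-module with some basis. As `R` is complete,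
elements of the completion `F̂` are the same as families of elements of `R`, indexed by the basis,
that tend to zero `𝔪`-adically (`ext_coord`, `finite_coord_notMem`, `exists_coord_eq`).

Flatness follows from the equational criterion. A relation `∑ fⱼ xⱼ = 0` in `F̂` puts every
coordinate vector `(xⱼ(i))ⱼ` in the finitely generated module of syzygies of `f`. By the
Artin-Rees lemma its coefficients on the generators can be chosen as divisible by `𝔪` as the
vector itself, up to a constant shift (`exists_coeff`), so these coefficients again tend to zero
and are coordinates of elements of `F̂` trivialising the relation.

Since `𝔪` is finitely generated, `𝔪 ^ n F̂` is the kernel of `F̂ → F / 𝔪 ^ n F`. This gives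
completeness, and the isomorphism of reductions (`lTensor_of_bijective`).
-/

namespace CompletedFree

variable {R : Type*} [CommRing R] {F : Type*} [AddCommGroup F] [Module R F] {ι : Type*}

lemma mem_smul_top_iff_repr (b : Module.Basis ι R F) (J : Ideal R) (z : F) :
    z ∈ (J • ⊤ : Submodule R F) ↔ ∀ i, b.repr z i ∈ J := by
  rw [← b.span_eq, Submodule.mem_ideal_smul_span_iff_exists_sum]
  constructor
  · rintro ⟨a, ha, rfl⟩ i
    have : b.repr (a.sum fun i c => c • b i) = a := b.repr_linearCombination a
    rw [this]
    exact ha i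
  · intro h
    exact ⟨b.repr z, h, b.linearCombination_repr z⟩

variable (I : Ideal R) [IsAdicComplete I R]

/-- The `i`-th coordinate of an element of the completion of a free module, with respect to a
basis `b`: the completed coordinate function, read in `R` through `R ≃ AdicCompletion I R`. -/
noncomputable def coord (b : Module.Basis ι R F) (i : ι) : AdicCompletion I F →ₗ[R] R :=
  (AdicCompletion.ofLinearEquiv I R).symm.toLinearMap ∘ₗ
    (AdicCompletion.map I (b.coord i)).restrictScalars R

/-- Modulo `I ^ n`, coordinates are those of any representative of the `n`-th component. -/
lemma coord_sub_mem (b : Module.Basis ι R F) (i : ι) (x : AdicCompletion I F) (n : ℕ) (z : F)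
    (hz : x.val n = Submodule.Quotient.mk z) : coord I b i x - b.repr z i ∈ I ^ n := by
  have h : AdicCompletion.of I R (coord I b i x) = AdicCompletion.map I (b.coord i) x := by
    simp [coord]
  have h2 := congrArg (fun y => y.val n) h
  simp only [AdicCompletion.map_val_apply, hz] at h2
  have h3 : (Submodule.Quotient.mk (coord I b i x) : R ⧸ (I ^ n • ⊤ : Submodule R R)) =
      Submodule.Quotient.mk (b.repr z i) := h2
  rw [Submodule.Quotient.eq] at h3
  simpa using h3

lemma ext_coord (b : Module.Basis ι R F) {x y : AdicCompletion I F}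
    (h : ∀ i, coord I b i x = coord I b i y) : x = y := by
  ext n
  obtain ⟨z, hz⟩ := Submodule.Quotient.mk_surjective _ (x.val n)
  obtain ⟨w, hw⟩ := Submodule.Quotient.mk_surjective _ (y.val n)
  rw [← hz, ← hw, Submodule.Quotient.eq, mem_smul_top_iff_repr b]
  intro i
  have h1 := coord_sub_mem I b i x n z hz.symm
  have h2 := coord_sub_mem I b i y n w hw.symm
  rw [h i] at h1
  simpa using sub_mem h2 h1

/-- The coordinate family of an element of the completion tends to zero `I`-adically. -/
lemma finite_coord_notMem (b : Module.Basis ι R F) (x : AdicCompletion I F) (n : ℕ) :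
    {i | coord I b i x ∉ I ^ n}.Finite := by
  obtain ⟨z, hz⟩ := Submodule.Quotient.mk_surjective _ (x.val n)
  refine (b.repr z).support.finite_toSet.subset fun i hi => ?_
  simp only [Finset.mem_coe, Finsupp.mem_support_iff]
  intro h0
  apply hi
  simpa [h0] using coord_sub_mem I b i x n z hz.symm

/-- Every family tending to zero `I`-adically is the coordinate family of an element of the
completion. -/
lemma exists_coord_eq (b : Module.Basis ι R F) (y : ι → R)
    (hy : ∀ n, {i | y i ∉ I ^ n}.Finite) :
    ∃ x : AdicCompletion I F, ∀ i, coord I b i x = y i := by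
  classical
  -- the `n`-th partial sum keeps the finitely many coordinates outside `I ^ n`
  let s : ℕ → F := fun n => b.repr.symm (Finsupp.onFinset (hy n).toFinset
    (fun i => if y i ∈ I ^ n then 0 else y i) (by simp +contextual))
  have hs : ∀ n i, b.repr (s n) i = if y i ∈ I ^ n then 0 else y i := by
    intro n i
    simp [s]
  have hs' : ∀ n i, y i - b.repr (s n) i ∈ I ^ n := by
    intro n i
    rw [hs]
    split_ifs with h <;> simp [h]
  have hc : ∀ n, s n ≡ s (n + 1) [SMOD (I ^ n • ⊤ : Submodule R F)] := by
    intro n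
    rw [SModEq.sub_mem, mem_smul_top_iff_repr b]
    intro i
    have := sub_mem (Ideal.pow_le_pow_right n.le_succ (hs' (n + 1) i)) (hs' n i)
    simpa using this
  refine ⟨AdicCompletion.mk I F (AdicCompletion.AdicCauchySequence.mk I F s hc), fun i => ?_⟩
  rw [IsHausdorff.eq_iff_smodEq (I := I)]
  intro n
  rw [SModEq.sub_mem]
  have h1 := coord_sub_mem I b i
    (AdicCompletion.mk I F (AdicCompletion.AdicCauchySequence.mk I F s hc)) n (s n) rfl
  simpa using sub_mem h1 (hs' n i)

/-- Given finitely many generators `g` of a submodule of `R ^ l`, the coefficients of an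
element with entries in `I ^ n` can be chosen in `I ^ (n - c)`, for all `n` simultaneously. This
is the Artin-Rees lemma applied at the largest such `n`, which exists unless the element is zero. -/
lemma exists_coeff [IsNoetherianRing R] {l k : ℕ} (g : Fin k → Fin l → R) :
    ∃ c : ℕ, ∀ X ∈ Submodule.span R (Set.range g), ∃ a : Fin k → R, ∑ p, a p • g p = X ∧
      ∀ n, (∀ j, X j ∈ I ^ n) → ∀ p, a p ∈ I ^ (n - c) := by
  classical
  obtain ⟨c, hc⟩ := Ideal.exists_pow_inf_eq_pow_smul I (Submodule.span R (Set.range g))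
  refine ⟨c, fun X hX => ?_⟩
  by_cases h0 : X = 0
  · exact ⟨0, by simp [h0], by simp⟩
  have key : ∀ n, (∀ j, X j ∈ I ^ n) →
      ∃ a : Fin k → R, ∑ p, a p • g p = X ∧ ∀ p, a p ∈ I ^ (n - c) := by
    intro n hn
    have hmem : X ∈ I ^ (n - c) • Submodule.span R (Set.range g) := by
      by_cases hcn : c ≤ n
      · have h1 : X ∈ I ^ n • ⊤ ⊓ Submodule.span R (Set.range g) :=
          ⟨(mem_smul_top_iff_repr (Pi.basisFun R (Fin l)) _ X).2 (by simpa using hn), hX⟩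
        rw [hc n hcn] at h1
        exact Submodule.smul_mono le_rfl inf_le_right h1
      · rw [Nat.sub_eq_zero_of_le (by lia)]
        simpa using hX
    obtain ⟨a, ha, hs⟩ := (Submodule.mem_ideal_smul_span_iff_exists_sum _ g X).1 hmem
    refine ⟨a, ?_, ha⟩
    rw [← hs, Finsupp.sum_fintype _ _ (by simp)]
  obtain ⟨j, hj⟩ : ∃ j, X j ≠ 0 := Function.ne_iff.1 h0
  obtain ⟨N, hN⟩ : ∃ N, X j ∉ I ^ N := by
    by_contra! h
    refine hj (IsHausdorff.haus (inferInstance : IsHausdorff I R) _ fun n => ?_)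
    rw [SModEq.zero]
    simpa using h n
  have hbound : ∀ n, (∀ j, X j ∈ I ^ n) → n ≤ N := by
    intro n hn
    by_contra! hlt
    exact hN (Ideal.pow_le_pow_right hlt.le (hn j))
  have h00 : ∀ j, X j ∈ I ^ 0 := by simp
  have hmax := Nat.findGreatest_spec (P := fun n => ∀ j, X j ∈ I ^ n) (Nat.zero_le N) h00
  obtain ⟨a, ha, ha'⟩ := key _ hmax
  refine ⟨a, ha, fun n hn p => Ideal.pow_le_pow_right ?_ (ha' p)⟩
  exact Nat.sub_le_sub_right
    (Nat.le_findGreatest (P := fun n => ∀ j, X j ∈ I ^ n) (hbound n hn) hn) c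

/-- The completion of a free module over a complete noetherian ring is flat: a linear relation
among elements is a relation in each coordinate, and it is trivialised there by the generators of
the syzygies of its coefficients, with coefficient families tending to zero. -/
theorem flat [IsNoetherianRing R] (b : Module.Basis ι R F) :
    Module.Flat R (AdicCompletion I F) := by
  refine Module.Flat.of_forall_isTrivialRelation fun {l f x} hfx => ?_
  let φ : (Fin l → R) →ₗ[R] R := Fintype.linearCombination R f
  obtain ⟨k, g, hg⟩ :=
    Submodule.fg_iff_exists_fin_generating_family.1 (IsNoetherian.noetherian (LinearMap.ker φ))
  obtain ⟨c, hc⟩ := exists_coeff I g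
  have hX : ∀ i, (fun j => coord I b i (x j)) ∈ Submodule.span R (Set.range g) := by
    intro i
    rw [hg, LinearMap.mem_ker]
    have := congrArg (coord I b i) hfx
    simpa [φ, Fintype.linearCombination_apply, mul_comm] using this
  choose a ha ha' using fun i => hc _ (hX i)
  have hnull : ∀ p n, {i | a i p ∉ I ^ n}.Finite := by
    intro p n
    refine (Set.finite_iUnion fun j => finite_coord_notMem I b (x j) (n + c)).subset fun i hi => ?_
    by_contra hcon
    simp only [Set.mem_iUnion, Set.mem_ofPred_eq, not_exists, not_not] at hcon
    exact hi (by simpa using ha' i (n + c) hcon p)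
  choose y hy using fun p => exists_coord_eq I b (fun i => a i p) (hnull p)
  refine ⟨k, fun j p => g p j, y, fun j => ext_coord I b fun i => ?_, fun p => ?_⟩
  · have := congrFun (ha i) j
    simp only [map_sum, map_smul, hy]
    simpa [mul_comm] using this.symm
  · have : g p ∈ LinearMap.ker φ := hg ▸ Submodule.subset_span ⟨p, rfl⟩
    rw [LinearMap.mem_ker] at this
    simpa [φ, Fintype.linearCombination_apply, mul_comm] using this

/-- Completion at a finitely generated ideal does not change the reductions modulo powers: the
inverse on `M̂ / I ^ n M̂` is induced by the projection `M̂ → M / I ^ n M`, whose kernel is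
`I ^ n M̂`. -/
theorem lTensor_of_bijective {R : Type*} [CommRing R] {I : Ideal R} (hI : I.FG)
    {F : Type*} [AddCommGroup F] [Module R F] (n : ℕ) :
    Function.Bijective (LinearMap.lTensor (R ⧸ I ^ n) (AdicCompletion.of I F)) := by
  have hker := AdicCompletion.pow_smul_top_eq_ker_eval (M := F) (n := n) hI
  let e₁ := TensorProduct.quotTensorEquivQuotSMul F (I ^ n)
  let e₂ := TensorProduct.quotTensorEquivQuotSMul (AdicCompletion I F) (I ^ n)
  let ε : (AdicCompletion I F ⧸ (I ^ n • ⊤ : Submodule R (AdicCompletion I F))) →ₗ[R]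
      F ⧸ (I ^ n • ⊤ : Submodule R F) :=
    Submodule.liftQ _ (AdicCompletion.eval I F n) hker.le
  have hε : Function.Bijective ε := by
    constructor
    · rw [← LinearMap.ker_eq_bot]
      exact Submodule.ker_liftQ_eq_bot _ _ _ hker.ge
    · intro z
      obtain ⟨x, hx⟩ := AdicCompletion.eval_surjective I F n z
      exact ⟨Submodule.Quotient.mk x, hx⟩
  have hcomp : (ε ∘ₗ e₂.toLinearMap) ∘ₗ LinearMap.lTensor (R ⧸ I ^ n) (AdicCompletion.of I F) =
      e₁.toLinearMap := by
    refine TensorProduct.ext' fun r z => ?_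
    obtain ⟨r, rfl⟩ := Ideal.Quotient.mk_surjective r
    simp only [LinearMap.comp_apply, LinearMap.lTensor_tmul, LinearEquiv.coe_coe, e₁, e₂,
      TensorProduct.quotTensorEquivQuotSMul_mk_tmul]
    rfl
  have h1 : Function.Bijective (ε ∘ₗ e₂.toLinearMap) := hε.comp e₂.bijective
  refine (Function.Bijective.of_comp_iff' h1 _).1 ?_
  rw [← LinearMap.coe_comp, hcomp]
  exact e₁.bijective

end CompletedFree


open IsLocalRing TensorProduct

/-- Let `K` be a field, `(R, 𝔪)` a parameter `K`-algebra, and `V` an arbitrary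
`K`-module.  Let `M` be the `𝔪`-adic completion of `R ⊗_K V`.  Then `M` is flat as an `R`-module
and `𝔪`-adically complete, and for every `i ≥ 0` the canonical map
`(R/𝔪^{i+1}) ⊗_K V → (R/𝔪^{i+1}) ⊗_R M` is bijective. -/
theorem statement0
    (K : Type) [Field K]
    (R : Type) [CommRing R] [Algebra K R] [IsNoetherianRing R] [IsLocalRing R]
    (hcomplete : IsAdicComplete (maximalIdeal R) R)
    (hres : Function.Bijective (algebraMap K (R ⧸ maximalIdeal R)))
    (V : Type) [AddCommGroup V] [Module K V] :
    Module.Flat R (AdicCompletion (maximalIdeal R) (R ⊗[K] V)) ∧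
    IsAdicComplete (maximalIdeal R) (AdicCompletion (maximalIdeal R) (R ⊗[K] V)) ∧
    ∀ i : ℕ, ∃ φ : ((R ⧸ (maximalIdeal R ^ (i + 1))) ⊗[K] V) →ₗ[R]
        ((R ⧸ (maximalIdeal R ^ (i + 1))) ⊗[R]
          (AdicCompletion (maximalIdeal R) (R ⊗[K] V))),
      (∀ (r : R) (v : V),
        φ ((Ideal.Quotient.mk (maximalIdeal R ^ (i + 1)) r) ⊗ₜ[K] v)
          = (Ideal.Quotient.mk (maximalIdeal R ^ (i + 1)) r) ⊗ₜ[R]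
            (AdicCompletion.of (maximalIdeal R) (R ⊗[K] V) ((1 : R) ⊗ₜ[K] v))) ∧
      Function.Bijective φ := by
  have hFG : (maximalIdeal R).FG := IsNoetherian.noetherian _
  refine ⟨CompletedFree.flat _ ((Module.Basis.ofVectorSpace K V).baseChange R),
    AdicCompletion.isAdicComplete hFG, fun i => ?_⟩
  let e := (AlgebraTensorModule.cancelBaseChange K R R (R ⧸ (maximalIdeal R ^ (i + 1))) V).symm
  let t := LinearMap.lTensor (R ⧸ (maximalIdeal R ^ (i + 1)))
    (AdicCompletion.of (maximalIdeal R) (R ⊗[K] V))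
  refine ⟨t ∘ₗ e.toLinearMap, fun r v => ?_,
    (CompletedFree.lTensor_of_bijective hFG (i + 1)).comp e.bijective⟩
  simp [t, e]
end

section
/- Let K be a field, (R, 𝔪) a parameter K-algebra, and (M_i, ψ_i)_{i∈ℕ} an 𝔪-adic system of R-modules such that each M_i is flat as a module over R_i := R/𝔪^{i+1}. Then M := lim_i M_i (the inverse limit along the maps ψ_i) is a flat and 𝔪-adically complete R-module, and for every i the canonical R-linear map R_i ⊗_R M → M_i is bijective. -/
/-!
Both the description of the reductions of `L = lim M_i` and its flatness come from successive
approximation.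

Every element `x` of the kernel of `L → M_i` is expanded in a finite generating family of
`𝔪^{i+1}`: if `x` is already such a combination up to an error vanishing in `M_{i+n}`, then the
image of the error in `M_{i+n+1}` lies in `𝔪^{i+1} 𝔪^n M_{i+n+1}`, so a correction of the
coefficients lying in `𝔪^n L` kills it there, and the coefficients converge. Hence the kernel is
`𝔪^{i+1} L` (`ker_limProj`); this gives completeness and `R_i ⊗ L ≅ L / 𝔪^{i+1} L ≅ M_i`.

For flatness, take an exact sequence `R^m → R^p → R^q` with matrices `B`, `A`, and `x` in `L^p` with
`A x = 0`. Modulo `𝔪^{i+1}` the solution `x` is a combination of solutions over `R_i`, as `M_i` is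
flat, and by the Artin-Rees lemma these lift to solutions over `R` up to a bounded loss of precision
(`approx_exact`). So `x` is approximated by elements `B y`. The same argument applied to `B` and its
own syzygies shows that an approximate zero `B z` can be written with a small `z`, so the `y` can be
chosen convergent and `x = B y` in the limit (`exact_of_complete`). With `q = 1` this is the
equational criterion of flatness.
-/

open IsLocalRing TensorProduct

/-- The inverse limit of an inverse system of `R`-modules `(M i, ψ i)`, realized as the
submodule of compatible sequences in the product `∀ i, M i`. -/
def invLimit {R : Type} [CommRing R] (M : ℕ → Type) [∀ i, AddCommGroup (M i)]
    [∀ i, Module R (M i)] (ψ : ∀ i, M (i + 1) →ₗ[R] M i) : Submodule R (∀ i, M i) where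
  carrier := {f | ∀ i, ψ i (f (i + 1)) = f i}
  add_mem' := by
    intro a b ha hb i
    simp [ha i, hb i]
  zero_mem' := by
    intro i
    simp
  smul_mem' := by
    intro r f hf i
    simp [hf i]

/-! ### A flatness criterion for complete modules -/

/-- The map `M^p → M^q` given by a matrix over `R`, for an arbitrary `R`-module `M`. -/
def act {R : Type} [CommRing R] (M : Type) [AddCommGroup M] [Module R M] {p q : ℕ}
    (A : Matrix (Fin q) (Fin p) R) : (Fin p → M) →ₗ[R] (Fin q → M) :=
  LinearMap.pi fun i => ∑ j, A i j • LinearMap.proj j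

section FlatnessCriterion

variable {R : Type} [CommRing R]

lemma act_apply {M : Type} [AddCommGroup M] [Module R M] {p q : ℕ}
    (A : Matrix (Fin q) (Fin p) R) (y : Fin p → M) (i : Fin q) :
    act M A y i = ∑ j, A i j • y j := by
  simp [act]

lemma act_mem {M : Type} [AddCommGroup M] [Module R M] {p q : ℕ}
    (A : Matrix (Fin q) (Fin p) R) {P : Submodule R M} {y : Fin p → M}
    (hy : ∀ j, y j ∈ P) (i : Fin q) : act M A y i ∈ P := by
  rw [act_apply]
  exact P.sum_mem fun j _ => P.smul_mem _ (hy j)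

lemma act_comp_eq_zero {M : Type} [AddCommGroup M] [Module R M] {p q m : ℕ}
    {A : Matrix (Fin q) (Fin p) R} {B : Matrix (Fin p) (Fin m) R} (h : A * B = 0)
    (y : Fin m → M) : act M A (act M B y) = 0 := by
  ext i
  simp only [act_apply, Finset.smul_sum, smul_smul, Pi.zero_apply]
  rw [Finset.sum_comm]
  refine Finset.sum_eq_zero fun k _ => ?_
  rw [← Finset.sum_smul, ← Matrix.mul_apply, h, Matrix.zero_apply, zero_smul]

lemma exists_kernel_matrix [IsNoetherianRing R] {p q : ℕ} (A : Matrix (Fin q) (Fin p) R) :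
    ∃ (m : ℕ) (B : Matrix (Fin p) (Fin m) R), A * B = 0 ∧
      ∀ v, act R A v = 0 → ∃ s, v = act R B s := by
  obtain ⟨m, b, hb⟩ := Submodule.fg_iff_exists_fin_generating_family.mp
    (IsNoetherian.noetherian (LinearMap.ker (act R A)))
  refine ⟨m, Matrix.of fun j k => b k j, ?_, fun v hv => ?_⟩
  · ext i k
    have hk : b k ∈ LinearMap.ker (act R A) := hb ▸ Submodule.subset_span ⟨k, rfl⟩
    have := congrFun (LinearMap.mem_ker.mp hk) i
    simpa [act_apply, Matrix.mul_apply] using this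
  · have hv' : v ∈ Submodule.span R (Set.range b) := hb ▸ LinearMap.mem_ker.mpr hv
    obtain ⟨s, hs⟩ := (Submodule.mem_span_range_iff_exists_fun R).mp hv'
    refine ⟨s, ?_⟩
    ext j
    rw [← hs]
    simp [act_apply, mul_comm]

/-- The Artin-Rees lemma for the image of a matrix: a vector mapped deep into the `I`-adic
filtration is a kernel element up to a deep error. -/
lemma artin_rees_matrix [IsNoetherianRing R] (I : Ideal R) {p q : ℕ}
    (A : Matrix (Fin q) (Fin p) R) :
    ∃ c, ∀ n (v : Fin p → R), (∀ i, act R A v i ∈ I ^ (n + c)) →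
      ∃ e : Fin p → R, (∀ j, e j ∈ I ^ n) ∧ act R A (v - e) = 0 := by
  obtain ⟨c, hc⟩ := I.exists_pow_inf_eq_pow_smul (LinearMap.range (act R A))
  refine ⟨c, fun n v hv => ?_⟩
  have h1 : act R A v ∈ (I ^ (n + c) • ⊤ : Submodule R (Fin q → R)) := by
    rw [pi_eq_sum_univ (act R A v)]
    exact Submodule.sum_mem _ fun i _ => Submodule.smul_mem_smul (hv i) trivial
  have h2 : act R A v ∈ Submodule.map (act R A) (I ^ n • ⊤) := by
    have h3 := (hc (n + c) (by omega)).le ⟨h1, ⟨v, rfl⟩⟩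
    rw [Nat.add_sub_cancel] at h3
    rw [Submodule.map_smul'', Submodule.map_top]
    exact Submodule.smul_mono le_rfl inf_le_right h3
  obtain ⟨e, he, hev⟩ := h2
  refine ⟨e, fun j => ?_, by rw [map_sub, hev, sub_self]⟩
  have : Submodule.map (LinearMap.proj j) (I ^ n • ⊤ : Submodule R (Fin p → R)) ≤ I ^ n := by
    rw [Submodule.map_smul'']
    exact Submodule.smul_le.mpr fun r hr x _ => Ideal.mul_mem_right x _ hr
  exact this ⟨e, he, rfl⟩

/-- The equational criterion of flatness for a system of equations: a solution in a flat module is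
a combination of solutions in the ring. -/
lemma flat_solutions {S N : Type} [CommRing S] [AddCommGroup N] [Module S N] [Module.Flat S N]
    {p q : ℕ} (A : Matrix (Fin q) (Fin p) S) (y : Fin p → N) (h : act N A y = 0) :
    ∃ (k : ℕ) (a : Fin k → Fin p → S) (z : Fin k → N),
      (∀ t, act S A (a t) = 0) ∧ ∀ j, y j = ∑ t, a t j • z t := by
  have h0 : (Fintype.linearCombination S y) ∘ₗ (Matrix.toLin' A.transpose) = 0 := by
    refine LinearMap.pi_ext' fun i => LinearMap.ext_ring ?_
    have := congrFun h i
    simpa [act_apply, Fintype.linearCombination_apply, Matrix.mulVec_single] using this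
  obtain ⟨k, a, z, hz, ha⟩ := Module.Flat.exists_factorization_of_comp_eq_zero_of_free h0
  refine ⟨k, fun t j => a (Pi.single j 1) t, fun t => z (Finsupp.single t 1), fun t => ?_,
    fun j => ?_⟩
  · ext i
    have h1 := DFunLike.congr_fun (LinearMap.congr_fun ha (Pi.single i 1)) t
    have h2 : Matrix.toLin' A.transpose (Pi.single i 1) = ∑ j, A i j • Pi.single j (1 : S) := by
      rw [← pi_eq_sum_univ']
      ext j
      simp [Matrix.mulVec_single]
    rw [LinearMap.comp_apply, h2] at h1
    simpa [act_apply] using h1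
  · have h1 := LinearMap.congr_fun hz (Pi.single j 1)
    have h2 : a (Pi.single j 1) = ∑ t, a (Pi.single j 1) t • Finsupp.single t (1 : S) := by
      ext t
      simp
    rw [LinearMap.comp_apply, h2, map_sum] at h1
    simpa only [map_smul, Fintype.linearCombination_apply_single, one_smul] using h1

lemma exists_seq_of_step {α : Type} (P : ℕ → α → Prop) (Q : ℕ → α → α → Prop)
    (h0 : ∃ a, P 0 a) (hs : ∀ n a, P n a → ∃ b, P (n + 1) b ∧ Q n a b) :
    ∃ f : ℕ → α, ∀ n, P n (f n) ∧ Q n (f n) (f (n + 1)) := by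
  obtain ⟨a, ha⟩ := h0
  choose! g hg using hs
  let f : ℕ → α := fun n => Nat.rec a (fun n b => g n b) n
  have hf : ∀ n, P n (f n) := fun n => by
    induction n with
    | zero => exact ha
    | succ n ih => exact (hg n _ ih).1
  exact ⟨f, fun n => ⟨hf n, (hg n _ (hf n)).2⟩⟩

/-- Sequences with `n`-th increment in the `n`-th step of a decreasing filtration are Cauchy. -/
lemma sub_mem_of_step {M : Type} [AddCommGroup M] [Module R M] {F : ℕ → Submodule R M}
    (hF : Antitone F) {f : ℕ → M} (hf : ∀ n, f (n + 1) - f n ∈ F n) {m n : ℕ} (hmn : m ≤ n) :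
    f n - f m ∈ F m := by
  induction n, hmn using Nat.le_induction with
  | base => simp
  | succ n hn ih =>
    rw [← sub_add_sub_cancel]
    exact (F m).add_mem (hF hn (hf n)) ih

lemma antitone_pow_smul_top (I : Ideal R) (M : Type) [AddCommGroup M] [Module R M] :
    Antitone fun n : ℕ => (I ^ n • ⊤ : Submodule R M) :=
  fun _ _ h => Submodule.smul_mono_left (Ideal.pow_le_pow_right h)

variable {M : Type} [AddCommGroup M] [Module R M] (I : Ideal R)
  (N : ℕ → Type) [∀ i, AddCommGroup (N i)] [∀ i, Module R (N i)]
  [∀ i, Module (R ⧸ I ^ (i + 1)) (N i)] [∀ i, IsScalarTower R (R ⧸ I ^ (i + 1)) (N i)]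
  (π : ∀ i, M →ₗ[R] N i)

/-- Suppose all `N_i ≅ M / I^{i+1} M` are flat over `R / I^{i+1}`. If every zero of `A` over `R` is
in the image of `B`, then every approximate zero of `A` over `M` is approximately in the image of
`B`, with a loss of precision `c` independent of `n`. -/
lemma approx_exact [IsNoetherianRing R] (hπ : ∀ i, Function.Surjective (π i))
    (hker : ∀ i, LinearMap.ker (π i) = I ^ (i + 1) • ⊤)
    (hflat : ∀ i, Module.Flat (R ⧸ I ^ (i + 1)) (N i))
    {p q m : ℕ} (A : Matrix (Fin q) (Fin p) R) (B : Matrix (Fin p) (Fin m) R)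
    (hAB : ∀ v, act R A v = 0 → ∃ s, v = act R B s) :
    ∃ c, ∀ n (y : Fin p → M), (∀ i, act M A y i ∈ (I ^ (n + c) • ⊤ : Submodule R M)) →
      ∃ w, ∀ j, (y - act M B w) j ∈ (I ^ n • ⊤ : Submodule R M) := by
  obtain ⟨c, hc⟩ := artin_rees_matrix I A
  -- `N l` is the reduction modulo `I ^ (l + 1)`, whence the shift by one
  refine ⟨c + 1, fun n y hy => ?_⟩
  set l := n + c with hl
  let A' : Matrix (Fin q) (Fin p) (R ⧸ I ^ (l + 1)) := A.map (Ideal.Quotient.mk _)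
  have hsm : ∀ (r : R) (x : N l), (Ideal.Quotient.mk (I ^ (l + 1)) r) • x = r • x := fun r x =>
    algebraMap_smul (R ⧸ I ^ (l + 1)) r x
  have h0 : act (N l) A' (fun j => π l (y j)) = 0 := by
    ext i
    have h1 : act M A y i ∈ LinearMap.ker (π l) := by rw [hker]; exact hy i
    rw [LinearMap.mem_ker, act_apply, map_sum] at h1
    simpa [act_apply, A', hsm] using h1
  have := hflat l
  obtain ⟨k, a, z, ha, hz⟩ := flat_solutions A' _ h0
  choose b hb using fun t j => Ideal.Quotient.mk_surjective (I := I ^ (l + 1)) (a t j)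
  choose x hx using fun t => hπ l (z t)
  have h2 : ∀ t i, act R A (b t) i ∈ I ^ (n + c) := fun t i => by
    refine Ideal.pow_le_pow_right (Nat.le_succ l) (Ideal.Quotient.eq_zero_iff_mem.mp ?_)
    have := congrFun (ha t) i
    simpa [act_apply, A', hb] using this
  choose e he hve using fun t => hc n (b t) (h2 t)
  choose s hs using fun t => hAB _ (hve t)
  refine ⟨fun k' => ∑ t, s t k' • x t, fun j => ?_⟩
  have h3 : y j - ∑ t, b t j • x t ∈ (I ^ n • ⊤ : Submodule R M) := by
    refine antitone_pow_smul_top I M (show n ≤ l + 1 by omega) ?_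
    change _ ∈ (I ^ (l + 1) • ⊤ : Submodule R M)
    rw [← hker, LinearMap.mem_ker, map_sub, map_sum, hz j, sub_eq_zero]
    exact Finset.sum_congr rfl fun t _ => by rw [map_smul, hx, ← hb, hsm]
  have h4 : ∑ t, e t j • x t ∈ (I ^ n • ⊤ : Submodule R M) :=
    Submodule.sum_mem _ fun t _ => Submodule.smul_mem_smul (he t j) trivial
  have h5 : act M B (fun k' => ∑ t, s t k' • x t) j
      = ∑ t, b t j • x t - ∑ t, e t j • x t := by
    simp only [act_apply, Finset.smul_sum, smul_smul]
    rw [Finset.sum_comm, ← Finset.sum_sub_distrib]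
    refine Finset.sum_congr rfl fun t _ => ?_
    rw [← sub_smul, ← Finset.sum_smul]
    congr 1
    have := congrFun (hs t) j
    simpa [act_apply] using this.symm
  rw [Pi.sub_apply, h5, ← sub_add]
  exact Submodule.add_mem _ h3 h4

/-- If all `M / I^{i+1} M` are flat over `R / I^{i+1}` and `M` is `I`-adically complete, then
exactness of `R^m → R^p → R^q` passes to `M^m → M^p → M^q`. A preimage is the limit of approximate
ones; `approx_exact` for the syzygies of `B` makes the successive corrections small. -/
lemma exact_of_complete [IsNoetherianRing R] [IsAdicComplete I M]
    (hπ : ∀ i, Function.Surjective (π i))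
    (hker : ∀ i, LinearMap.ker (π i) = I ^ (i + 1) • ⊤)
    (hflat : ∀ i, Module.Flat (R ⧸ I ^ (i + 1)) (N i))
    {p q m : ℕ} (A : Matrix (Fin q) (Fin p) R) (B : Matrix (Fin p) (Fin m) R) (hAB0 : A * B = 0)
    (hAB : ∀ v, act R A v = 0 → ∃ s, v = act R B s) (x : Fin p → M) (hx : act M A x = 0) :
    ∃ y, x = act M B y := by
  obtain ⟨m', C, hBC0, hBC⟩ := exists_kernel_matrix B
  obtain ⟨c, hc⟩ := approx_exact I N π hπ hker hflat A B hAB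
  obtain ⟨d, hd⟩ := approx_exact I N π hπ hker hflat B C hBC
  have hA : ∀ y n i, act M A (x - act M B y) i ∈ (I ^ (n + c) • ⊤ : Submodule R M) := by
    intro y n i
    rw [map_sub, hx, act_comp_eq_zero hAB0, sub_zero]
    exact Submodule.zero_mem _
  obtain ⟨f, hf⟩ := exists_seq_of_step
    (fun n (y : Fin m → M) => ∀ j, (x - act M B y) j ∈ (I ^ (n + d) • ⊤ : Submodule R M))
    (fun n y y' => ∀ k, (y' - y) k ∈ (I ^ n • ⊤ : Submodule R M))
    (by simpa using hc (0 + d) x (by simpa using hA 0 (0 + d)))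
    (fun n y hy => by
      obtain ⟨z, hz⟩ := hc (n + 1 + d) _ (hA y (n + 1 + d))
      have hBz : ∀ j, act M B z j ∈ (I ^ (n + d) • ⊤ : Submodule R M) := fun j => by
        have h1 := antitone_pow_smul_top I M (show n + d ≤ n + 1 + d by omega) (hz j)
        have h2 := Submodule.sub_mem _ (hy j) h1
        simpa using h2
      obtain ⟨w, hw⟩ := hd n z hBz
      -- subtracting the syzygy `C w` makes the correction small without changing `B z`
      refine ⟨y + (z - act M C w), fun j => ?_, by simpa using hw⟩
      have := hz j
      rw [map_add, map_sub, act_comp_eq_zero hBC0, sub_zero, ← sub_sub]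
      exact this)
  have hlim : ∀ k, ∃ L, ∀ n, f n k ≡ L [SMOD (I ^ n • ⊤ : Submodule R M)] := fun k =>
    IsPrecomplete.prec' (I := I) (fun n => f n k) fun {a b} hab =>
      (SModEq.sub_mem.mpr (sub_mem_of_step (antitone_pow_smul_top I M) (f := fun n => f n k)
        (fun n => (hf n).2 k) hab)).symm
  choose y hy using hlim
  refine ⟨y, ?_⟩
  ext j
  rw [IsHausdorff.eq_iff_smodEq (I := I)]
  intro n
  rw [SModEq.sub_mem]
  have h1 := antitone_pow_smul_top I M (show n ≤ n + d by omega) ((hf n).1 j)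
  have h2 := act_mem B (P := (I ^ n • ⊤ : Submodule R M)) (y := f n - y)
    (fun k => SModEq.sub_mem.mp (hy k n)) j
  have h3 := Submodule.add_mem _ h1 h2
  simpa [map_sub] using h3

/-- A local criterion of flatness: over a noetherian ring, an `I`-adically complete module all of
whose reductions modulo powers of `I` are flat is flat. -/
theorem flat_of_complete [IsNoetherianRing R] [IsAdicComplete I M]
    (hπ : ∀ i, Function.Surjective (π i))
    (hker : ∀ i, LinearMap.ker (π i) = I ^ (i + 1) • ⊤)
    (hflat : ∀ i, Module.Flat (R ⧸ I ^ (i + 1)) (N i)) : Module.Flat R M := by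
  refine Module.Flat.of_forall_isTrivialRelation fun {l f x} hfx => ?_
  let A : Matrix (Fin 1) (Fin l) R := Matrix.of fun _ j => f j
  obtain ⟨m, B, h0, hAB⟩ := exists_kernel_matrix A
  obtain ⟨y, hy⟩ := exact_of_complete I N π hπ hker hflat A B h0 hAB x (by
    ext i
    simpa [act_apply, A] using hfx)
  refine ⟨m, B, y, fun i => ?_, fun k => ?_⟩
  · rw [hy, act_apply]
  · simpa [Matrix.mul_apply, A] using congrFun (congrFun h0 0) k

end FlatnessCriterion

/-! ### The inverse limit of an adic system -/

lemma exists_of_mem_span_smul {R M : Type} [CommRing R] [AddCommGroup M] [Module R M] {s : ℕ}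
    (g : Fin s → R) (P : Submodule R M) {x : M} (hx : x ∈ Ideal.span (Set.range g) • P) :
    ∃ y : Fin s → M, (∀ a, y a ∈ P) ∧ x = ∑ a, g a • y a := by
  induction hx using Submodule.smul_induction_on' with
  | smul r hr n hn =>
    obtain ⟨c, rfl⟩ := Ideal.mem_span_range_iff_exists_fun.mp hr
    exact ⟨fun a => c a • n, fun a => P.smul_mem _ hn, by
      simp [Finset.sum_smul, smul_smul, mul_comm]⟩
  | add x _ y _ hx hy =>
    obtain ⟨u, hu, rfl⟩ := hx
    obtain ⟨v, hv, rfl⟩ := hy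
    exact ⟨u + v, fun a => P.add_mem (hu a) (hv a), by simp [Finset.sum_add_distrib]⟩

section InverseLimit

variable {R : Type} [CommRing R] {M : ℕ → Type} [∀ i, AddCommGroup (M i)] [∀ i, Module R (M i)]
  {ψ : ∀ i, M (i + 1) →ₗ[R] M i}

variable (M ψ) in
/-- The projection from the inverse limit to the `i`-th module of the system. -/
def limProj (i : ℕ) : invLimit M ψ →ₗ[R] M i := LinearMap.proj i ∘ₗ (invLimit M ψ).subtype

lemma map_limProj (i : ℕ) (x : invLimit M ψ) : ψ i (limProj M ψ (i + 1) x) = limProj M ψ i x :=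
  x.2 i

lemma antitone_ker_limProj : Antitone fun i => LinearMap.ker (limProj M ψ i) :=
  antitone_nat_of_succ_le fun i x hx => by
    rw [LinearMap.mem_ker] at hx ⊢
    rw [← map_limProj, hx, map_zero]

lemma limProj_ext {x y : invLimit M ψ} (h : ∀ i, limProj M ψ i x = limProj M ψ i y) : x = y :=
  Subtype.ext (funext h)

lemma limProj_surjective (hsurj : ∀ i, Function.Surjective (ψ i)) (i : ℕ) :
    Function.Surjective (limProj M ψ i) := by
  intro m
  -- a family compatible below stage `i`, and equal to `m` there
  have h0 : ∀ i (m : M i), ∃ f : ∀ j, M j, f i = m ∧ ∀ j < i, ψ j (f (j + 1)) = f j := by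
    intro i
    induction i with
    | zero => exact fun m => ⟨Function.update 0 0 m, by simp, by simp⟩
    | succ i ih =>
      intro m
      obtain ⟨f, hf, hf'⟩ := ih (ψ i m)
      refine ⟨Function.update f (i + 1) m, by simp, fun j hj => ?_⟩
      rw [Function.update_of_ne hj.ne]
      rcases Nat.lt_succ_iff_lt_or_eq.mp hj with h | rfl
      · rw [Function.update_of_ne (by omega), hf' j h]
      · simp [hf]
  obtain ⟨F, hF⟩ := exists_seq_of_step
    (fun n (f : ∀ j, M j) => f i = m ∧ ∀ j < i + n, ψ j (f (j + 1)) = f j)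
    (fun n f f' => ∀ j ≤ i + n, f' j = f j) (by simpa using h0 i m)
    (fun n f hf => by
      obtain ⟨u, hu⟩ := hsurj (i + n) (f (i + n))
      have hne : ∀ j ≤ i + n, Function.update f (i + n + 1) u j = f j := fun j hj =>
        Function.update_of_ne (by omega) _ _
      refine ⟨Function.update f (i + n + 1) u, ⟨by rw [hne i (by omega), hf.1], fun j hj => ?_⟩,
        hne⟩
      rw [hne j (by omega)]
      rcases Nat.lt_succ_iff_lt_or_eq.mp (show j < i + n + 1 from hj) with h | rfl
      · rw [hne (j + 1) (by omega), hf.2 j h]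
      · simp [hu])
  -- the entry at `j` has stabilised from step `j` on, so the diagonal is compatible
  refine ⟨⟨fun j => F j j, fun j => ?_⟩, (hF i).1.1⟩
  rw [(hF (j + 1)).1.2 j (by omega), (hF j).2 j (by omega)]

/-- Cauchy sequences for the filtration by the kernels of the projections converge. -/
lemma exists_limit_of_step {f : ℕ → invLimit M ψ}
    (hf : ∀ n, f (n + 1) - f n ∈ LinearMap.ker (limProj M ψ n)) :
    ∃ L, ∀ n, f n - L ∈ LinearMap.ker (limProj M ψ n) := by
  have h : ∀ n, limProj M ψ n (f (n + 1)) = limProj M ψ n (f n) := fun n =>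
    sub_eq_zero.mp (by simpa using hf n)
  refine ⟨⟨fun n => limProj M ψ n (f n), fun n => ?_⟩, fun n => ?_⟩
  · rw [map_limProj, h]
  · rw [LinearMap.mem_ker, map_sub, sub_eq_zero]
    rfl

variable {I : Ideal R}

lemma pow_smul_top_le_ker (hann : ∀ i, (I ^ (i + 1) • ⊤ : Submodule R (M i)) = ⊥) (i : ℕ) :
    (I ^ (i + 1) • ⊤ : Submodule R (invLimit M ψ)) ≤ LinearMap.ker (limProj M ψ i) := by
  rw [LinearMap.le_ker_iff_map, Submodule.map_smul'', eq_bot_iff, ← hann]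
  exact Submodule.smul_mono le_rfl le_top

/-- The kernel of `lim M → M_i` is `I^{i+1} lim M`: an element of the kernel is expanded in a finite
generating family of `I^{i+1}`, with coefficients found by successive approximation. -/
lemma ker_limProj (hI : ∀ n : ℕ, (I ^ n).FG)
    (hann : ∀ i, (I ^ (i + 1) • ⊤ : Submodule R (M i)) = ⊥)
    (hsurj : ∀ i, Function.Surjective (ψ i))
    (hker : ∀ i, LinearMap.ker (ψ i) = (I ^ (i + 1) • ⊤ : Submodule R (M (i + 1)))) (i : ℕ) :
    LinearMap.ker (limProj M ψ i) = I ^ (i + 1) • ⊤ := by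
  refine le_antisymm (fun x hx => ?_) (pow_smul_top_le_ker hann i)
  obtain ⟨s, g, hg⟩ := Submodule.fg_iff_exists_fin_generating_family.mp (hI (i + 1))
  change Ideal.span (Set.range g) = _ at hg
  obtain ⟨F, hF⟩ := exists_seq_of_step
    (fun n (y : Fin s → invLimit M ψ) =>
      x - ∑ a, g a • y a ∈ LinearMap.ker (limProj M ψ (i + n)))
    (fun n y y' => ∀ a, y' a - y a ∈ (I ^ n • ⊤ : Submodule R (invLimit M ψ)))
    ⟨0, by simpa using hx⟩
    (fun n y hy => by
      set r := x - ∑ a, g a • y a with hr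
      have h1 : limProj M ψ (i + n + 1) r ∈ LinearMap.ker (ψ (i + n)) := by
        rw [LinearMap.mem_ker, map_limProj]
        exact hy
      have hpow : I ^ (i + n + 1) = I ^ (i + 1) • I ^ n := by
        rw [smul_eq_mul, ← pow_add]
        congr 1
        omega
      rw [hker, hpow, Submodule.smul_assoc, ← hg] at h1
      obtain ⟨u, hu, hru⟩ := exists_of_mem_span_smul g _ h1
      have h2 : ∀ a, ∃ v ∈ (I ^ n • ⊤ : Submodule R (invLimit M ψ)),
          limProj M ψ (i + n + 1) v = u a := fun a => by
        have h3 : Submodule.map (limProj M ψ (i + n + 1)) (I ^ n • ⊤) = I ^ n • ⊤ := by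
          rw [Submodule.map_smul'', Submodule.map_top,
            LinearMap.range_eq_top.mpr (limProj_surjective hsurj _)]
        have h4 := hu a
        rw [← h3] at h4
        exact h4
      choose v hv hvu using h2
      refine ⟨y + v, ?_, by simpa using hv⟩
      have h5 : x - ∑ a, g a • (y + v) a = r - ∑ a, g a • v a := by
        simp only [hr, Pi.add_apply, smul_add, Finset.sum_add_distrib, sub_sub]
      rw [h5, LinearMap.mem_ker, map_sub, sub_eq_zero, map_sum]
      simp only [map_smul]
      refine hru.trans (Finset.sum_congr rfl fun a _ => ?_)
      rw [← hvu]
      rfl)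
  have hlim : ∀ a, ∃ L, ∀ n, F (n + 1) a - L ∈ LinearMap.ker (limProj M ψ n) := fun a =>
    exists_limit_of_step fun n => pow_smul_top_le_ker hann n ((hF (n + 1)).2 a)
  choose y hy using hlim
  have hxy : x = ∑ a, g a • y a := by
    refine limProj_ext fun n => ?_
    have h1 := antitone_ker_limProj (show n ≤ i + (n + 1) by omega) (hF (n + 1)).1
    rw [LinearMap.mem_ker, map_sub, sub_eq_zero] at h1
    rw [h1, map_sum, map_sum]
    refine Finset.sum_congr rfl fun a _ => ?_
    have h2 := hy a n
    rw [LinearMap.mem_ker, map_sub, sub_eq_zero] at h2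
    rw [map_smul, map_smul, h2]
  rw [hxy]
  exact Submodule.sum_mem _ fun a _ =>
    Submodule.smul_mem_smul (hg ▸ Ideal.subset_span ⟨a, rfl⟩) trivial

lemma isAdicComplete_invLimit
    (hk : ∀ i, LinearMap.ker (limProj M ψ i) = I ^ (i + 1) • ⊤) :
    IsAdicComplete I (invLimit M ψ) where
  haus' x hx := limProj_ext fun i => by
    rw [map_zero, ← LinearMap.mem_ker, hk]
    exact SModEq.zero.mp (hx (i + 1))
  prec' f hf := by
    obtain ⟨L, hL⟩ := exists_limit_of_step (f := fun n => f (n + 1)) fun n => by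
      rw [hk]
      exact SModEq.sub_mem.mp (hf (Nat.le_succ (n + 1))).symm
    refine ⟨L, fun n => ?_⟩
    cases n with
    | zero => simp [SModEq.sub_mem]
    | succ n =>
      rw [SModEq.sub_mem, ← hk]
      exact hL n

/-- A surjection `π : L → N` with kernel `J L` identifies `R/J ⊗ L` with `N`. -/
lemma exists_quotTensor_bijective {L N : Type} [AddCommGroup L] [Module R L] [AddCommGroup N]
    [Module R N] (J : Ideal R) (π : L →ₗ[R] N) (hπ : Function.Surjective π)
    (hk : LinearMap.ker π = J • ⊤) :
    ∃ φ : ((R ⧸ J) ⊗[R] L) →ₗ[R] N,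
      (∀ r x, φ (Ideal.Quotient.mk J r ⊗ₜ[R] x) = r • π x) ∧ Function.Bijective φ := by
  let e : ((R ⧸ J) ⊗[R] L) ≃ₗ[R] N := quotTensorEquivQuotSMul L J ≪≫ₗ
    Submodule.quotEquivOfEq _ _ hk.symm ≪≫ₗ π.quotKerEquivOfSurjective hπ
  refine ⟨e.toLinearMap, fun r x => ?_, e.bijective⟩
  simp [e, quotTensorEquivQuotSMul_mk_tmul]

end InverseLimit

/-- Let `(R, 𝔪)` be a parameter `K`-algebra and `(M_i, ψ_i)` an `𝔪`-adic system
of `R`-modules such that each `M_i` is flat over `R_i := R/𝔪^{i+1}`.  Then `M := lim_i M_i` is a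
flat and `𝔪`-adically complete `R`-module, and for every `i` the canonical `R`-linear map
`R_i ⊗_R M → M_i` is bijective. -/
theorem statement2
    (K : Type) [Field K]
    (R : Type) [CommRing R] [Algebra K R] [IsNoetherianRing R] [IsLocalRing R]
    (hcomplete : IsAdicComplete (maximalIdeal R) R)
    (hres : Function.Bijective (algebraMap K (R ⧸ maximalIdeal R)))
    (M : ℕ → Type) [∀ i, AddCommGroup (M i)] [∀ i, Module R (M i)]
    [∀ i, Module (R ⧸ (maximalIdeal R ^ (i + 1))) (M i)]
    [∀ i, IsScalarTower R (R ⧸ (maximalIdeal R ^ (i + 1))) (M i)]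
    (ψ : ∀ i, M (i + 1) →ₗ[R] M i)
    -- condition (i): `𝔪^{i+1}` annihilates `M_i`, i.e. `M_i` is an `R_i`-module
    (hann : ∀ i, (maximalIdeal R ^ (i + 1) • ⊤ : Submodule R (M i)) = ⊥)
    -- condition (ii): the induced map `R_i ⊗_{R_{i+1}} M_{i+1} → M_i` is an isomorphism,
    -- i.e. `ψ_i` is surjective with kernel `𝔪^{i+1} M_{i+1}`
    (hsurj : ∀ i, Function.Surjective (ψ i))
    (hker : ∀ i, LinearMap.ker (ψ i)
      = (maximalIdeal R ^ (i + 1) • ⊤ : Submodule R (M (i + 1))))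
    -- each `M_i` is flat over `R_i`
    (hflat : ∀ i, Module.Flat (R ⧸ (maximalIdeal R ^ (i + 1))) (M i)) :
    Module.Flat R ↥(invLimit M ψ) ∧
    IsAdicComplete (maximalIdeal R) ↥(invLimit M ψ) ∧
    ∀ i : ℕ, ∃ φ : ((R ⧸ (maximalIdeal R ^ (i + 1))) ⊗[R] ↥(invLimit M ψ)) →ₗ[R] M i,
      (∀ (r : R) (f : ↥(invLimit M ψ)),
        φ ((Ideal.Quotient.mk (maximalIdeal R ^ (i + 1)) r) ⊗ₜ[R] f)
          = r • (f : ∀ j, M j) i) ∧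
      Function.Bijective φ := by
  have hsurj' := limProj_surjective hsurj
  have hker' := ker_limProj (fun n => IsNoetherian.noetherian _) hann hsurj hker
  have hcompl := isAdicComplete_invLimit hker'
  exact ⟨flat_of_complete (maximalIdeal R) M (limProj M ψ) hsurj' hker' hflat, hcompl,
    fun i => exists_quotTensor_bijective _ (limProj M ψ i) (hsurj' i) (hker' i)⟩
end

section
/- Let K be a field, let σ : R → R' be a K-algebra homomorphism between parameter K-algebras (R, 𝔪) and (R', 𝔪') (one automatically has σ(𝔪) ⊆ 𝔪'), let C be a commutative K-algebra, and let (A, π) be an associative R-deformation of C. For each i ≥ 0 set A'_i := (R'/𝔪'^{i+1}) ⊗_R A, a ring, and let A' := lim_i A'_i. Then A' is an associative unital R'-algebra that is flat and 𝔪'-adically complete as an R'-module, the canonical R'-algebra homomorphism A' → C induced by π is surjective with kernel 𝔪'A' (so A' together with this augmentation is an associative R'-deformation of C), and the canonical map A → A' is an R-algebra homomorphism commuting with the augmentations to C. -/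
set_option synthInstance.maxHeartbeats 1000000
set_option maxHeartbeats 1000000

open IsLocalRing TensorProduct

variable (R : Type) [CommRing R]
variable (R' : Type) [CommRing R'] [IsLocalRing R'] [Algebra R R']
variable (A : Type) [Ring A] [Algebra R A]

/-- The level-`i` piece `(R'/𝔪'^{i+1}) ⊗_R A` of `A' = lim_i (R'/𝔪'^{i+1}) ⊗_R A`. -/
abbrev BCLevel (i : ℕ) : Type := (R' ⧸ (maximalIdeal R' ^ (i + 1))) ⊗[R] A

/-- The transition homomorphism `(R'/𝔪'^{i+2}) ⊗_R A → (R'/𝔪'^{i+1}) ⊗_R A`. -/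
noncomputable def bcTransition (i : ℕ) :
    BCLevel R R' A (i + 1) →ₐ[R] BCLevel R R' A i :=
  Algebra.TensorProduct.map
    (Ideal.Quotient.liftₐ (maximalIdeal R' ^ (i + 1 + 1))
      (Ideal.Quotient.mkₐ R (maximalIdeal R' ^ (i + 1)))
      (fun a ha => by
        rw [Ideal.Quotient.mkₐ_eq_mk, Ideal.Quotient.eq_zero_iff_mem]
        exact Ideal.pow_le_pow_right (Nat.le_succ _) ha))
    (AlgHom.id R A)

/-- The inverse limit `A' := lim_i (R'/𝔪'^{i+1}) ⊗_R A`, realized as the subring of compatible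
sequences in the product of the `(R'/𝔪'^{i+1}) ⊗_R A`. -/
noncomputable def bcLimit : Subring (∀ i, BCLevel R R' A i) where
  carrier := {f | ∀ i, bcTransition R R' A i (f (i + 1)) = f i}
  mul_mem' := by
    intro a b ha hb i
    simp only [Pi.mul_apply, map_mul]
    rw [ha i, hb i]
  add_mem' := by
    intro a b ha hb i
    simp only [Pi.add_apply, map_add]
    rw [ha i, hb i]
  one_mem' := by
    intro i
    simp only [Pi.one_apply, map_one]
  zero_mem' := by
    intro i
    simp only [Pi.zero_apply, map_zero]
  neg_mem' := by
    intro a ha i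
    simp only [Pi.neg_apply, map_neg]
    rw [ha i]

/-! Choose a `K`-basis `c` of `C` and lift it along `π` to a family `a` in `A`. For every `i` the
family `1 ⊗ a b` is a basis of `(R'/𝔪'^{i+1}) ⊗_R A` over `R'/𝔪'^{i+1}`: linear independence is a
property of flat modules over a local ring (it can be tested modulo the maximal ideal, where
`c` decides it), and generation is Nakayama's lemma for a nilpotent ideal (`exists_levelBasis`).
The transition maps respect these bases, so taking coordinates identifies `A'` with the
`R'`-module `nullSeq 𝔪' B` of families `B → R'` tending to zero `𝔪'`-adically
(`exists_nullSeq_equiv`); this uses that `R'` is complete.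

Everything is then read off from `nullSeq 𝔪' B`. The one analytic input is
`exists_nullSeq_lift`: for a linear map `φ : R'^s → R'^l`, a null family with values in the range
of `φ` is the image of a null family. It follows from the Artin-Rees lemma, which bounds
the loss of `𝔪'`-adic order when choosing preimages. Applied to generators of the relation
module of a row `f`, it gives the equational criterion of flatness; applied to generators of an
ideal `J`, it shows that `J • nullSeq 𝔪' B` consists of the null families with values in `J`, from
which completeness and the description of the kernel of the augmentation follow. -/

/-! ### Null families over a noetherian ring -/

/-- The `S`-module of families `B → S` that tend to zero `I`-adically: for every `n`, all but
finitely many members lie in `I ^ n`. -/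
def nullSeq {S : Type} [CommRing S] (I : Ideal S) (B : Type) : Submodule S (B → S) where
  carrier := {g | ∀ n : ℕ, {b | g b ∉ I ^ n}.Finite}
  add_mem' := by
    intro f g hf hg n
    refine ((hf n).union (hg n)).subset fun b hb => ?_
    by_contra h
    simp only [Set.mem_union, Set.mem_ofPred_eq, not_or, not_not] at h
    exact hb (add_mem h.1 h.2)
  zero_mem' := by intro n; simp
  smul_mem' := by
    intro s g hg n
    exact (hg n).subset fun b hb h => hb (Ideal.mul_mem_left _ _ h)

theorem mem_nullSeq {S : Type} [CommRing S] {I : Ideal S} {B : Type} {g : B → S} :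
    g ∈ nullSeq I B ↔ ∀ n : ℕ, {b | g b ∉ I ^ n}.Finite := Iff.rfl

theorem mem_pow_smul_top_pi {S : Type} [CommRing S] (J : Ideal S) {l : ℕ} {x : Fin l → S} :
    x ∈ (J • ⊤ : Submodule S (Fin l → S)) ↔ ∀ i, x i ∈ J := by
  constructor
  · intro h i
    have := Submodule.smul_top_le_comap_smul_top J (LinearMap.proj (R := S) (φ := fun _ : Fin l => S) i) h
    simpa using this
  · intro h
    rw [pi_eq_sum_univ' x]
    exact sum_mem fun i _ => Submodule.smul_mem_smul (h i) trivial

/-- By the Artin-Rees lemma, elements in the range of `φ` have preimages losing only a fixed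
amount `k` of `I`-adic order, with one preimage serving all orders `n` at once. -/
theorem exists_controlled_preimage {S : Type} [CommRing S] [IsNoetherianRing S] {I : Ideal S}
    (hI : IsHausdorff I S) {s l : ℕ} (φ : (Fin s → S) →ₗ[S] (Fin l → S)) :
    ∃ k : ℕ, ∀ x ∈ LinearMap.range φ, ∃ y, φ y = x ∧
      ∀ n, (∀ i, x i ∈ I ^ (n + k)) → ∀ j, y j ∈ I ^ n := by
  obtain ⟨k, hk⟩ := Ideal.exists_pow_inf_eq_pow_smul I (LinearMap.range φ)
  have step : ∀ n, ∀ x ∈ LinearMap.range φ, (∀ i, x i ∈ I ^ (n + k)) →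
      ∃ y, φ y = x ∧ ∀ j, y j ∈ I ^ n := by
    intro n x hx hxn
    have h1 : x ∈ I ^ (n + k) • ⊤ ⊓ LinearMap.range φ := ⟨(mem_pow_smul_top_pi _).2 hxn, hx⟩
    rw [hk (n + k) (by omega), Nat.add_sub_cancel] at h1
    have h2 : x ∈ I ^ n • LinearMap.range φ := Submodule.smul_mono le_rfl inf_le_right h1
    rw [← Submodule.map_top, ← Submodule.map_smul''] at h2
    obtain ⟨y, hy, rfl⟩ := h2
    exact ⟨y, rfl, (mem_pow_smul_top_pi _).1 hy⟩
  refine ⟨k, fun x hx => ?_⟩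
  by_cases hall : ∀ n, ∀ i, x i ∈ I ^ (n + k)
  · have hx0 : x = 0 := by
      funext i
      refine hI.haus _ fun n => ?_
      rw [SModEq.zero]
      simpa using Ideal.pow_le_pow_right (Nat.le_add_right n k) (hall n i)
    exact ⟨0, by simp [hx0], by simp⟩
  · classical
    push Not at hall
    -- the largest `n` with `x ∈ I ^ (n + k)` is one below the first failure
    by_cases h0 : Nat.find hall = 0
    · obtain ⟨y, rfl⟩ := hx
      refine ⟨y, rfl, fun n hn => ?_⟩
      exfalso
      obtain ⟨i, hi⟩ := Nat.find_spec hall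
      exact hi (Ideal.pow_le_pow_right (by omega) (hn i))
    · obtain ⟨y, hy, hyn⟩ := step (Nat.find hall - 1) x hx (by
        have := Nat.find_min hall (m := Nat.find hall - 1) (by omega)
        push Not at this
        exact this)
      refine ⟨y, hy, fun n hn j => ?_⟩
      have : n < Nat.find hall := by
        by_contra hlt
        obtain ⟨i, hi⟩ := Nat.find_spec hall
        exact hi (Ideal.pow_le_pow_right (by omega) (hn i))
      exact Ideal.pow_le_pow_right (by omega) (hyn j)

/-- A null family with values in the range of `φ` lifts along `φ` to a null family. -/
theorem exists_nullSeq_lift {S : Type} [CommRing S] [IsNoetherianRing S] {I : Ideal S}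
    (hI : IsHausdorff I S) {B : Type} {s l : ℕ} (φ : (Fin s → S) →ₗ[S] (Fin l → S))
    (x : Fin l → nullSeq I B) (hx : ∀ b, (fun i => (x i : B → S) b) ∈ LinearMap.range φ) :
    ∃ y : Fin s → nullSeq I B,
      ∀ b, φ (fun j => (y j : B → S) b) = fun i => (x i : B → S) b := by
  obtain ⟨k, hk⟩ := exists_controlled_preimage hI φ
  choose y hy hyn using fun b => hk _ (hx b)
  refine ⟨fun j => ⟨fun b => y b j, fun n => ?_⟩, hy⟩
  refine (Set.finite_iUnion fun i => (x i).2 (n + k)).subset fun b hb => ?_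
  by_contra h
  simp only [Set.mem_iUnion, Set.mem_ofPred_eq, not_exists, not_not] at h
  exact hb (hyn b n h j)

/-- Equational criterion: a relation `∑ f i • x i = 0` puts each `(x i b)_i` in the relation module
of `f`, and `exists_nullSeq_lift` is applied to generators `z` of that module. -/
theorem nullSeq_flat {S : Type} [CommRing S] [IsNoetherianRing S] {I : Ideal S}
    (hI : IsHausdorff I S) (B : Type) : Module.Flat S (nullSeq I B) := by
  refine Module.Flat.of_forall_isTrivialRelation fun {l f x} hfx => ?_
  let Z : Submodule S (Fin l → S) := LinearMap.ker (Fintype.linearCombination S f)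
  obtain ⟨s, z, hz⟩ := Submodule.fg_iff_exists_fin_generating_family.1
    (IsNoetherian.noetherian Z)
  obtain ⟨y, hy⟩ := exists_nullSeq_lift hI (Fintype.linearCombination S z) x (fun b => by
    rw [Fintype.range_linearCombination, hz, LinearMap.mem_ker, Fintype.linearCombination_apply]
    have := congrFun (congrArg Subtype.val hfx) b
    simpa [mul_comm] using this)
  refine ⟨s, fun i j => z j i, y, fun i => ?_, fun j => ?_⟩
  · ext b
    have := congrFun (hy b) i
    simp only [Fintype.linearCombination_apply, Finset.sum_apply, Pi.smul_apply,
      smul_eq_mul] at this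
    simp [← this, mul_comm]
  · have : z j ∈ Z := hz ▸ Submodule.subset_span ⟨j, rfl⟩
    rw [LinearMap.mem_ker, Fintype.linearCombination_apply] at this
    simpa [mul_comm] using this

/-- Membership in `J • nullSeq I B` is pointwise: `exists_nullSeq_lift` is applied to the row of
generators of `J`. -/
theorem mem_smul_top_nullSeq {S : Type} [CommRing S] [IsNoetherianRing S] {I : Ideal S}
    (hI : IsHausdorff I S) {B : Type} (J : Ideal S) (g : nullSeq I B) :
    g ∈ (J • ⊤ : Submodule S (nullSeq I B)) ↔ ∀ b, (g : B → S) b ∈ J := by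
  constructor
  · intro h b
    have := Submodule.smul_top_le_comap_smul_top J
      ((LinearMap.proj (R := S) (φ := fun _ : B => S) b).comp (nullSeq I B).subtype) h
    simpa using this
  · intro h
    obtain ⟨s, t, ht⟩ := Submodule.fg_iff_exists_fin_generating_family.1
      (IsNoetherian.noetherian J)
    obtain ⟨y, hy⟩ := exists_nullSeq_lift hI
      (Fintype.linearCombination S (fun j => (fun _ => t j : Fin 1 → S))) (fun _ => g) (fun b => by
        have hb := h b
        rw [← ht, ← Fintype.range_linearCombination] at hb
        obtain ⟨w, hw⟩ := hb
        refine ⟨w, ?_⟩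
        funext i
        simpa [Fintype.linearCombination_apply] using hw)
    have hg : g = ∑ j, t j • y j := by
      ext b
      have := congrFun (hy b) 0
      simp only [Fintype.linearCombination_apply, Finset.sum_apply, Pi.smul_apply,
        smul_eq_mul] at this
      simp [← this, mul_comm]
    rw [hg]
    exact sum_mem fun j _ => Submodule.smul_mem_smul (ht ▸ Submodule.subset_span ⟨j, rfl⟩) trivial

theorem nullSeq_isAdicComplete {S : Type} [CommRing S] [IsNoetherianRing S] {I : Ideal S}
    (hI : IsAdicComplete I S) (B : Type) : IsAdicComplete I (nullSeq I B) := by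
  have hH := hI.toIsHausdorff
  refine { haus' := fun x hx => ?_, prec' := fun f hf => ?_ }
  · ext b
    refine hH.haus _ fun n => ?_
    have := hx n
    rw [SModEq.zero, mem_smul_top_nullSeq hH] at this
    rw [SModEq.zero]
    simpa using this b
  · have hf' : ∀ {m n}, m ≤ n → ∀ b, (f m : B → S) b - (f n : B → S) b ∈ I ^ m := by
      intro m n h b
      have := hf h
      rw [SModEq.sub_mem, mem_smul_top_nullSeq hH] at this
      exact this b
    choose L hL using fun b => hI.toIsPrecomplete.prec (f := fun n => (f n : B → S) b)
      (fun {m n} h => by rw [SModEq.sub_mem]; simpa using hf' h b)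
    have hL' : ∀ b n, (f n : B → S) b - L b ∈ I ^ n := by
      intro b n
      have := hL b n
      rw [SModEq.sub_mem] at this
      simpa using this
    refine ⟨⟨L, fun n => ((f n).2 n).subset fun b hb hfb => hb ?_⟩, fun n => ?_⟩
    · have := sub_mem hfb (hL' b n)
      simpa using this
    · rw [SModEq.sub_mem, mem_smul_top_nullSeq hH]
      exact fun b => hL' b n

theorem mem_smul_top_iff_of_equiv {S M N : Type} [CommRing S] [AddCommGroup M] [Module S M]
    [AddCommGroup N] [Module S N] (e : M ≃ₗ[S] N) (J : Ideal S) (x : M) :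
    x ∈ (J • ⊤ : Submodule S M) ↔ e x ∈ (J • ⊤ : Submodule S N) := by
  have : (J • ⊤ : Submodule S N) = (J • ⊤ : Submodule S M).map e.toLinearMap := by
    rw [Submodule.map_smul'', Submodule.map_top, LinearEquiv.range]
  rw [this]
  exact ⟨fun h => ⟨x, h, rfl⟩, fun ⟨y, hy, hyx⟩ => e.injective hyx ▸ hy⟩

theorem isAdicComplete_of_equiv {S M N : Type} [CommRing S] [AddCommGroup M] [Module S M]
    [AddCommGroup N] [Module S N] {I : Ideal S} (e : M ≃ₗ[S] N) (h : IsAdicComplete I N) :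
    IsAdicComplete I M := by
  have key := fun n => mem_smul_top_iff_of_equiv e (I ^ n)
  refine { haus' := fun x hx => ?_, prec' := fun f hf => ?_ }
  · rw [← e.map_eq_zero_iff]
    refine h.toIsHausdorff.haus _ fun n => ?_
    rw [SModEq.zero, ← key, ← SModEq.zero]
    exact hx n
  · obtain ⟨L, hL⟩ := h.toIsPrecomplete.prec (f := fun n => e (f n)) (fun {m n} hmn => by
      rw [SModEq.sub_mem, ← map_sub, ← key, ← SModEq.sub_mem]; exact hf hmn)
    refine ⟨e.symm L, fun n => ?_⟩
    rw [SModEq.sub_mem, key, map_sub, e.apply_symm_apply, ← SModEq.sub_mem]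
    exact hL n

/-! ### Residue maps and bases of flat modules -/

theorem exists_residue {K R : Type} [Field K] [CommRing R] [Algebra K R] [IsLocalRing R]
    (hres : Function.Bijective (algebraMap K (R ⧸ maximalIdeal R))) :
    ∃ κ : R →+* K, (∀ k, κ (algebraMap K R k) = k) ∧ ∀ r, κ r = 0 ↔ r ∈ maximalIdeal R := by
  refine ⟨(RingEquiv.ofBijective _ hres).symm.toRingHom.comp (Ideal.Quotient.mk _),
    fun k => ?_, fun r => ?_⟩
  · exact (RingEquiv.ofBijective _ hres).symm_apply_apply k
  · simp [Ideal.Quotient.eq_zero_iff_mem]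

theorem ker_eq_maximalIdeal_of_surjective {K S : Type} [Field K] [CommRing S] [IsLocalRing S]
    (κ : S →+* K) (hκ : Function.Surjective κ) (s : S) : κ s = 0 ↔ s ∈ maximalIdeal S := by
  rw [← IsLocalRing.eq_maximalIdeal (RingHom.ker_isMaximal_of_surjective κ hκ), RingHom.mem_ker]

/-- A `K`-algebra homomorphism `R → K` from a local `K`-algebra is unique, since its kernel has to be
the maximal ideal. Hence a `K`-algebra homomorphism between such algebras with residue field `K` is
local. -/
theorem residue_unique {K R : Type} [Field K] [CommRing R] [Algebra K R] [IsLocalRing R]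
    (κ μ : R →+* K) (hκ : ∀ k, κ (algebraMap K R k) = k) (hμ : ∀ k, μ (algebraMap K R k) = k)
    (r : R) : μ r = κ r := by
  have h : κ (r - algebraMap K R (κ r)) = 0 := by rw [map_sub, hκ, sub_self]
  rw [ker_eq_maximalIdeal_of_surjective κ (fun k => ⟨_, hκ k⟩),
    ← ker_eq_maximalIdeal_of_surjective μ (fun k => ⟨_, hμ k⟩), map_sub, hμ, sub_eq_zero] at h
  exact h

/-- The augmentation `s ⊗ a ↦ κ s * π a`; the hypothesis says that it is balanced over `R`. -/
theorem exists_augmentation {K R S A C : Type} [Field K] [CommRing R] [CommRing S] [Algebra R S]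
    [Ring A] [Algebra R A] [CommRing C] [Algebra K C] (κ : S →+* K) (π : A →+* C)
    (h : ∀ r, π (algebraMap R A r) = algebraMap K C (κ (algebraMap R S r))) :
    ∃ ε : S ⊗[R] A →+* C, ∀ s a, ε (s ⊗ₜ a) = algebraMap K C (κ s) * π a := by
  let _ : Algebra R C := (((algebraMap K C).comp κ).comp (algebraMap R S)).toAlgebra
  let f : S →ₐ[R] C := { (algebraMap K C).comp κ with commutes' := fun r => rfl }
  let g : A →ₐ[R] C := { π with commutes' := fun r => h r }
  exact ⟨(Algebra.TensorProduct.lift f g (fun _ _ => Commute.all _ _)).toRingHom,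
    fun s a => Algebra.TensorProduct.lift_tmul f g _ s a⟩

/-- In a flat module over a local ring, linear independence can be tested after a `κ`-semilinear
map to a vector space over the residue field. -/
theorem linearIndependent_of_augmentation {K S M C B : Type} [Field K] [CommRing S]
    [IsLocalRing S] [AddCommGroup M] [Module S M] [Module.Flat S M] [AddCommGroup C] [Module K C]
    (κ : S →+* K) (hκ : Function.Surjective κ) (ε : M →+ C)
    (hε : ∀ (s : S) x, ε (s • x) = κ s • ε x) (v : B → M)
    (hv : LinearIndependent K (fun b => ε (v b))) : LinearIndependent S v := by
  refine Module.IsLocalRing.linearIndependent_of_flat v ?_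
  rw [linearIndependent_iff']
  intro s g hg b hb
  choose t ht using fun b => Ideal.Quotient.mk_surjective (g b)
  have h1 : TensorProduct.mk S (S ⧸ maximalIdeal S) M 1 (∑ b ∈ s, t b • v b) = 0 := by
    refine Eq.trans ?_ hg
    rw [map_sum]
    refine Finset.sum_congr rfl fun b _ => ?_
    rw [← ht b, map_smul]
    rfl
  rw [← LinearMap.mem_ker, LinearMap.ker_tensorProductMk] at h1
  have h2 : ∀ x ∈ (maximalIdeal S • ⊤ : Submodule S M), ε x = 0 := by
    intro x hx
    induction hx using Submodule.smul_induction_on' with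
    | smul r hr n hn => rw [hε, (ker_eq_maximalIdeal_of_surjective κ hκ r).2 hr, zero_smul]
    | add x hx y hy h h' => rw [map_add, h, h', add_zero]
  have h3 := h2 _ h1
  rw [map_sum] at h3
  simp only [hε] at h3
  have := linearIndependent_iff'.1 hv s _ h3 b hb
  rw [ker_eq_maximalIdeal_of_surjective κ hκ, ← Ideal.Quotient.eq_zero_iff_mem] at this
  rw [← ht b]
  exact this

/-- Nakayama's lemma for a nilpotent ideal, with no finiteness assumption on `M`. -/
theorem eq_top_of_sup_smul_top {S M : Type} [CommRing S] [AddCommGroup M] [Module S M]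
    (J : Ideal S) (hJ : IsNilpotent J) (N : Submodule S M) (h : N ⊔ J • ⊤ = ⊤) : N = ⊤ := by
  obtain ⟨n, hn⟩ := hJ
  have : ∀ k, N ⊔ J ^ k • ⊤ = ⊤ := by
    intro k
    induction k with
    | zero => simp
    | succ k ih =>
      refine top_le_iff.1 (ih.symm.le.trans (sup_le le_sup_left ?_))
      calc J ^ k • (⊤ : Submodule S M) = J ^ k • (N ⊔ J • ⊤) := by rw [h]
        _ = J ^ k • N ⊔ J ^ (k + 1) • ⊤ := by
          rw [Submodule.smul_sup, ← Submodule.mul_smul, ← pow_succ]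
        _ ≤ _ := sup_le_sup_right Submodule.smul_le_right _
  have := this n
  rwa [hn, Submodule.zero_eq_bot, Submodule.bot_smul, sup_bot_eq] at this

/-- Lifts to `A` of a spanning family of `C` generate `S ⊗_R A` over `S` when the maximal ideal of `S`
is nilpotent. -/
theorem span_baseChange_eq_top {K R S A C B : Type} [Field K] [CommRing R] [IsLocalRing R]
    [Algebra K R] [CommRing S] [IsLocalRing S] [Algebra R S] [Ring A] [Algebra K A] [Algebra R A]
    [IsScalarTower K R A] [CommRing C] [Algebra K C]
    (hRS : ∀ r ∈ maximalIdeal R, algebraMap R S r ∈ maximalIdeal S)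
    (hnil : IsNilpotent (maximalIdeal S)) (π : A →ₐ[K] C)
    (hker : ∀ a : A, π a = 0 → a ∈ (maximalIdeal R • ⊤ : Submodule R A))
    (a : B → A) (ha : Submodule.span K (Set.range fun b => π (a b)) = ⊤) :
    Submodule.span S (Set.range fun b => (1 : S) ⊗ₜ[R] a b) = ⊤ := by
  refine eq_top_of_sup_smul_top _ hnil _ ?_
  set N := Submodule.span S (Set.range fun b => (1 : S) ⊗ₜ[R] a b) with hN
  have hm : ∀ x ∈ (maximalIdeal R • ⊤ : Submodule R A),
      (1 : S) ⊗ₜ[R] x ∈ N ⊔ maximalIdeal S • ⊤ := by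
    intro x hx
    induction hx using Submodule.smul_induction_on' with
    | smul r hr n hn =>
      refine Submodule.mem_sup_right ?_
      have : (1 : S) ⊗ₜ[R] (r • n) = algebraMap R S r • ((1 : S) ⊗ₜ[R] n) := by
        rw [TensorProduct.tmul_smul, algebraMap_smul]
      rw [this]
      exact Submodule.smul_mem_smul (hRS r hr) trivial
    | add x hx y hy h h' => rw [TensorProduct.tmul_add]; exact add_mem h h'
  have hspan : ∀ x ∈ Submodule.span K (Set.range a), (1 : S) ⊗ₜ[R] x ∈ N := by
    intro x hx
    induction hx using Submodule.span_induction with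
    | mem x hx => obtain ⟨b, rfl⟩ := hx; exact Submodule.subset_span ⟨b, rfl⟩
    | zero => rw [TensorProduct.tmul_zero]; exact zero_mem _
    | add x y _ _ h h' => rw [TensorProduct.tmul_add]; exact add_mem h h'
    | smul k x _ h =>
      have : (1 : S) ⊗ₜ[R] (k • x) = algebraMap R S (algebraMap K R k) • ((1 : S) ⊗ₜ[R] x) := by
        rw [show k • x = algebraMap K R k • x from (algebraMap_smul R k x).symm, TensorProduct.tmul_smul,
          algebraMap_smul S (algebraMap K R k)]
      rw [this]
      exact N.smul_mem _ h
  have h1 : ∀ x : A, (1 : S) ⊗ₜ[R] x ∈ N ⊔ maximalIdeal S • ⊤ := by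
    intro x
    have hx : π x ∈ (Submodule.span K (Set.range a)).map π.toLinearMap := by
      rw [Submodule.map_span, ← Set.range_comp]
      change _ ∈ Submodule.span K (Set.range fun b => π (a b))
      rw [ha]; trivial
    obtain ⟨y, hy, hyx⟩ := hx
    have := add_mem (Submodule.mem_sup_left (hspan y hy))
      (hm (x - y) (hker _ (by rw [map_sub, ← hyx]; exact sub_self _)))
    rwa [← TensorProduct.tmul_add, add_sub_cancel] at this
  rw [eq_top_iff]
  intro x _
  induction x with
  | zero => exact zero_mem _
  | add x y h h' => exact add_mem (h trivial) (h' trivial)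
  | tmul s x =>
    have := Submodule.smul_mem _ s (h1 x)
    rwa [TensorProduct.smul_tmul', smul_eq_mul, mul_one] at this

/-! ### Coordinates on the inverse limit -/

/-- Coordinates of the image under a semilinear map that matches two bases. -/
theorem repr_map_of_semilinear {S T M N B : Type} [CommRing S] [CommRing T] [AddCommGroup M]
    [Module S M] [AddCommGroup N] [Module T N] (τ : S →+* T) (β : Module.Basis B S M)
    (γ : Module.Basis B T N) (f : M →+ N) (hf : ∀ (s : S) x, f (s • x) = τ s • f x)
    (hβ : ∀ b, f (β b) = γ b) (x : M) (b : B) : γ.repr (f x) b = τ (β.repr x b) := by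
  classical
  induction β.mem_span x using Submodule.span_induction with
  | mem x hx =>
    obtain ⟨b', rfl⟩ := hx
    rw [hβ, Module.Basis.repr_self, Module.Basis.repr_self, Finsupp.single_apply,
      Finsupp.single_apply]
    split_ifs <;> simp
  | zero => simp
  | add x y _ _ h h' => simp [h, h']
  | smul s x _ h => simp [hf, h]

/-- Each level `(R'/𝔪'^{i+1}) ⊗_R A` is free on the lifts of a `K`-basis of `C`, and carries the
augmentation to `C` induced by the residue map `κ'` and `π`. -/
theorem exists_levelBasis {K R R' C A B : Type} [Field K] [CommRing R] [Algebra K R]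
    [IsLocalRing R] [CommRing R'] [Algebra K R'] [IsLocalRing R'] [Algebra R R'] [CommRing C]
    [Algebra K C] [Ring A] [Algebra K A] [Algebra R A] [IsScalarTower K R A]
    [Module.Flat R A] (κ' : R' →+* K) (hκ' : ∀ k, κ' (algebraMap K R' k) = k)
    (hRR' : ∀ r ∈ maximalIdeal R, algebraMap R R' r ∈ maximalIdeal R')
    (π : A →ₐ[K] C) (hker : ∀ a : A, π a = 0 → a ∈ (maximalIdeal R • ⊤ : Submodule R A))
    (hπ : ∀ r, π (algebraMap R A r) = algebraMap K C (κ' (algebraMap R R' r)))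
    (c : Module.Basis B K C) (a : B → A) (ha : ∀ b, π (a b) = c b) (i : ℕ) :
    ∃ (κi : R' ⧸ maximalIdeal R' ^ (i + 1) →+* K) (ε : BCLevel R R' A i →+* C)
      (β : Module.Basis B (R' ⧸ maximalIdeal R' ^ (i + 1)) (BCLevel R R' A i)),
      (∀ r, κi (Ideal.Quotient.mk _ r) = κ' r) ∧
      (∀ s x, ε (s ⊗ₜ x) = algebraMap K C (κi s) * π x) ∧
      (∀ b, β b = 1 ⊗ₜ a b) := by
  have hκ'0 := ker_eq_maximalIdeal_of_surjective κ' (fun k => ⟨_, hκ' k⟩)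
  have hle : ∀ r ∈ maximalIdeal R' ^ (i + 1), κ' r = 0 := fun r hr =>
    (hκ'0 r).2 (Ideal.pow_le_self (Nat.succ_ne_zero i) hr)
  set S := R' ⧸ maximalIdeal R' ^ (i + 1) with hS
  let κi : S →+* K := Ideal.Quotient.lift _ κ' hle
  have hκi : ∀ r, κi (Ideal.Quotient.mk _ r) = κ' r := fun r => rfl
  have hsurj : Function.Surjective κi := fun k => ⟨Ideal.Quotient.mk _ (algebraMap K R' k), hκ' k⟩
  have : Nontrivial S := κi.domain_nontrivial
  have : IsLocalRing S := IsLocalRing.of_surjective' (Ideal.Quotient.mk _)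
    Ideal.Quotient.mk_surjective
  have hRS : ∀ r ∈ maximalIdeal R, algebraMap R S r ∈ maximalIdeal S := fun r hr => by
    rw [← ker_eq_maximalIdeal_of_surjective κi hsurj]
    exact (hκ'0 _).2 (hRR' r hr)
  have hnil : IsNilpotent (maximalIdeal S) := by
    refine ⟨i + 1, ?_⟩
    have hmap : maximalIdeal S ≤ (maximalIdeal R').map (Ideal.Quotient.mk _) := by
      intro s hs
      obtain ⟨r, rfl⟩ := Ideal.Quotient.mk_surjective s
      rw [← ker_eq_maximalIdeal_of_surjective κi hsurj, hκi, hκ'0] at hs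
      exact Ideal.mem_map_of_mem _ hs
    rw [Ideal.zero_eq_bot, eq_bot_iff]
    refine (Ideal.pow_right_mono hmap (i + 1)).trans ?_
    rw [← Ideal.map_pow, Ideal.map_quotient_self]
  obtain ⟨ε, hε⟩ := exists_augmentation (S := S) κi π.toRingHom (fun r => hπ r)
  have hεs : ∀ (s : S) (x : S ⊗[R] A), ε (s • x) = κi s • ε x := by
    intro s x
    induction x with
    | zero => simp
    | add x y h h' => rw [smul_add, map_add, map_add, h, h', smul_add]
    | tmul t x =>
      rw [TensorProduct.smul_tmul', hε, hε, smul_eq_mul, map_mul, map_mul, mul_assoc,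
        Algebra.smul_def]
  have hεa : ∀ b, ε ((1 : S) ⊗ₜ[R] a b) = c b := by
    intro b
    rw [hε, map_one, map_one, one_mul]
    exact ha b
  have hLI : LinearIndependent S (fun b => (1 : S) ⊗ₜ[R] a b) := by
    refine linearIndependent_of_augmentation κi hsurj ε.toAddMonoidHom hεs _ ?_
    have : (fun b => ε.toAddMonoidHom ((1 : S) ⊗ₜ[R] a b)) = c := funext hεa
    rw [this]
    exact c.linearIndependent
  have hspan := span_baseChange_eq_top (B := B) hRS hnil π hker a (by
    have : (fun b => π (a b)) = c := funext ha
    rw [this, c.span_eq])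
  exact ⟨κi, ε, Module.Basis.mk hLI hspan.ge, hκi, hε, fun b => Module.Basis.mk_apply _ _ b⟩

section Limit

variable {R R' A B : Type} [CommRing R] [CommRing R'] [IsLocalRing R'] [Algebra R R']
  [Ring A] [Algebra R A]

/-- The projection `R'/𝔪'^{i+2} → R'/𝔪'^{i+1}` of the coefficient rings of two consecutive
levels. -/
noncomputable def bcFactor (R' : Type) [CommRing R'] [IsLocalRing R'] (i : ℕ) :
    R' ⧸ maximalIdeal R' ^ (i + 1 + 1) →+* R' ⧸ maximalIdeal R' ^ (i + 1) :=
  Ideal.Quotient.factor (Ideal.pow_le_pow_right (Nat.le_add_right (i + 1) 1))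

theorem bcFactor_mk (i : ℕ) (r : R') :
    bcFactor R' i (Ideal.Quotient.mk _ r) = Ideal.Quotient.mk _ r := rfl

theorem bcTransition_tmul (i : ℕ) (r : R') (x : A) :
    bcTransition R R' A i (Ideal.Quotient.mk (maximalIdeal R' ^ (i + 1 + 1)) r ⊗ₜ x) =
      Ideal.Quotient.mk (maximalIdeal R' ^ (i + 1)) r ⊗ₜ x := rfl

theorem bcTransition_smul (i : ℕ) (s : R' ⧸ maximalIdeal R' ^ (i + 1 + 1))
    (x : BCLevel R R' A (i + 1)) :
    bcTransition R R' A i (s • x) =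
      bcFactor R' i s • bcTransition R R' A i x := by
  obtain ⟨r, rfl⟩ := Ideal.Quotient.mk_surjective s
  induction x using TensorProduct.induction_on with
  | zero => simp
  | add x y h h' => rw [smul_add, map_add, map_add, h, h', smul_add]
  | tmul t x =>
    obtain ⟨t, rfl⟩ := Ideal.Quotient.mk_surjective t
    rw [TensorProduct.smul_tmul', smul_eq_mul, ← map_mul, bcTransition_tmul, bcTransition_tmul,
      bcFactor_mk, TensorProduct.smul_tmul', smul_eq_mul, map_mul]

theorem repr_bcTransition {a : B → A}
    (β : ∀ i, Module.Basis B (R' ⧸ maximalIdeal R' ^ (i + 1)) (BCLevel R R' A i))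
    (hβ : ∀ i b, β i b = 1 ⊗ₜ a b) (i : ℕ) (x : BCLevel R R' A (i + 1)) (b : B) :
    (β i).repr (bcTransition R R' A i x) b =
      bcFactor R' i ((β (i + 1)).repr x b) := by
  have hone : ∀ b, bcTransition R R' A i (β (i + 1) b) = β i b := fun b => by
    rw [hβ, hβ]
    exact bcTransition_tmul i 1 (a b)
  let f : BCLevel R R' A (i + 1) →+ BCLevel R R' A i := (bcTransition R R' A i).toAddMonoidHom
  exact repr_map_of_semilinear _ (β (i + 1)) (β i) f (bcTransition_smul i) hone x b

/-- The coordinates of a compatible sequence form a null family over the complete ring `R'`, and this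
identifies `A'` with `nullSeq 𝔪' B`. The module structure is pinned down by `hsmul`. -/
theorem exists_nullSeq_equiv (hR' : IsAdicComplete (maximalIdeal R') R') {a : B → A}
    (β : ∀ i, Module.Basis B (R' ⧸ maximalIdeal R' ^ (i + 1)) (BCLevel R R' A i))
    (hβ : ∀ i b, β i b = 1 ⊗ₜ a b) [Module R' (bcLimit R R' A)]
    (hsmul : ∀ (r : R') (x : bcLimit R R' A) i,
      (r • x : bcLimit R R' A).1 i = Ideal.Quotient.mk (maximalIdeal R' ^ (i + 1)) r • x.1 i) :
    ∃ e : nullSeq (maximalIdeal R') B ≃ₗ[R'] bcLimit R R' A,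
      ∀ g i b, (β i).repr ((e g).1 i) b = Ideal.Quotient.mk _ ((g : B → R') b) := by
  let F : ∀ i, nullSeq (maximalIdeal R') B → B →₀ R' ⧸ maximalIdeal R' ^ (i + 1) := fun i g =>
    Finsupp.ofSupportFinite (fun b => Ideal.Quotient.mk _ ((g : B → R') b))
      ((g.2 (i + 1)).subset fun b hb h => hb (Ideal.Quotient.eq_zero_iff_mem.2 h))
  have hF : ∀ i g b, F i g b = Ideal.Quotient.mk _ ((g : B → R') b) := fun _ _ _ => rfl
  have hcomp : ∀ g, (fun i => (β i).repr.symm (F i g)) ∈ bcLimit R R' A := by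
    intro g i
    refine (β i).repr.injective (Finsupp.ext fun b => ?_)
    rw [repr_bcTransition β hβ, LinearEquiv.apply_symm_apply, LinearEquiv.apply_symm_apply,
      hF, hF, bcFactor_mk]
  let Ψ : nullSeq (maximalIdeal R') B →ₗ[R'] bcLimit R R' A :=
    { toFun := fun g => ⟨fun i => (β i).repr.symm (F i g), hcomp g⟩
      map_add' := fun g h => by
        refine Subtype.ext (funext fun i => ?_)
        change (β i).repr.symm (F i (g + h)) =
          (β i).repr.symm (F i g) + (β i).repr.symm (F i h)
        rw [← map_add]
        congr 1
        ext b
        simp [hF]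
      map_smul' := fun r g => by
        refine Subtype.ext (funext fun i => ?_)
        rw [RingHom.id_apply, hsmul]
        change (β i).repr.symm (F i (r • g)) = _ • (β i).repr.symm (F i g)
        rw [← map_smul]
        congr 1
        ext b
        simp [hF] }
  have hΨ : ∀ g i b, (β i).repr ((Ψ g).1 i) b = Ideal.Quotient.mk _ ((g : B → R') b) := by
    intro g i b
    change (β i).repr ((β i).repr.symm (F i g)) b = _
    rw [LinearEquiv.apply_symm_apply, hF]
  refine ⟨LinearEquiv.ofBijective Ψ ⟨?_, ?_⟩, hΨ⟩
  · rw [injective_iff_map_eq_zero]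
    intro g hg
    ext b
    refine hR'.toIsHausdorff.haus _ fun n => ?_
    have := hΨ g n b
    rw [hg] at this
    change (β n).repr 0 b = _ at this
    rw [map_zero, Finsupp.zero_apply, eq_comm, Ideal.Quotient.eq_zero_iff_mem] at this
    rw [SModEq.zero]
    simpa using Ideal.pow_le_pow_right (Nat.le_succ n) this
  · intro x
    choose t ht using fun i b => Ideal.Quotient.mk_surjective ((β i).repr (x.1 i) b)
    have hstep : ∀ i b, t (i + 1) b - t i b ∈ maximalIdeal R' ^ (i + 1) := by
      intro i b
      rw [← Ideal.Quotient.eq, ht, ← x.2 i, repr_bcTransition β hβ, ← ht,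
        bcFactor_mk]
    have hmono : ∀ b {m n}, m ≤ n → t m b - t n b ∈ maximalIdeal R' ^ m := by
      intro b m n hmn
      induction n, hmn using Nat.le_induction with
      | base => simp
      | succ n hmn ih =>
        have := Ideal.pow_le_pow_right (show m ≤ n + 1 by omega) (hstep n b)
        have h2 := sub_mem ih this
        rwa [sub_sub_sub_cancel_right] at h2
    -- `L b` is the `𝔪'`-adic limit of lifts `t i b` of the coordinates of `x` at level `i`
    choose L hL using fun b => hR'.toIsPrecomplete.prec (f := fun n => t n b)
      (fun {m n} h => by rw [SModEq.sub_mem]; simpa using hmono b h)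
    have hmk : ∀ i b, Ideal.Quotient.mk (maximalIdeal R' ^ (i + 1)) (L b) =
        (β i).repr (x.1 i) b := by
      intro i b
      rw [← ht, eq_comm, Ideal.Quotient.eq]
      -- `L b` agrees with `t n b` only modulo `𝔪' ^ n`, so `n = i + 1` is needed at level `i`
      have h1 := hL b (i + 1)
      rw [SModEq.sub_mem] at h1
      have h2 : t (i + 1) b - L b ∈ maximalIdeal R' ^ (i + 1) := by simpa using h1
      simpa using sub_mem h2 (hstep i b)
    have hnull : L ∈ nullSeq (maximalIdeal R') B := by
      intro n
      refine ((β n).repr (x.1 n)).hasFiniteSupport.subset fun b hb h0 => hb ?_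
      rw [← hmk, Ideal.Quotient.eq_zero_iff_mem] at h0
      exact Ideal.pow_le_pow_right (Nat.le_succ n) h0
    refine ⟨⟨L, hnull⟩, Subtype.ext (funext fun i => (β i).repr.injective (Finsupp.ext fun b => ?_))⟩
    rw [hΨ]
    exact hmk i b

end Limit

/-! ### The base change -/

theorem tmul_one_mul_eq_smul {R S A : Type} [CommRing R] [CommRing S] [Algebra R S] [Ring A]
    [Algebra R A] (s : S) (x : S ⊗[R] A) : (s ⊗ₜ[R] (1 : A)) * x = s • x := by
  induction x with
  | zero => simp
  | add x y h h' => rw [mul_add, smul_add, h, h']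
  | tmul t a => simp [TensorProduct.smul_tmul']

theorem mul_tmul_one_eq_smul {R S A : Type} [CommRing R] [CommRing S] [Algebra R S] [Ring A]
    [Algebra R A] (s : S) (x : S ⊗[R] A) : x * (s ⊗ₜ[R] (1 : A)) = s • x := by
  induction x with
  | zero => simp
  | add x y h h' => rw [add_mul, smul_add, h, h']
  | tmul t a => simp [TensorProduct.smul_tmul', mul_comm]

/-- Let `σ : R → R'` be a `K`-algebra homomorphism of parameter `K`-algebras
(encoded here by `[Algebra R R']` and `[IsScalarTower K R R']`), `C` a commutative `K`-algebra
and `(A, π)` an associative `R`-deformation of `C`.  Then `A' := lim_i (R'/𝔪'^{i+1}) ⊗_R A` is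
an associative unital `R'`-algebra (via the canonical central homomorphism `θ : R' → A'`) that
is flat and `𝔪'`-adically complete as an `R'`-module, the canonical `R'`-algebra homomorphism
`π' : A' → C` induced by `π` is surjective with kernel `𝔪'A'`, and the canonical map
`ρ : A → A'` is an `R`-algebra homomorphism commuting with the augmentations to `C`. -/
theorem statement6
    (K : Type) [Field K]
    (R : Type) [CommRing R] [Algebra K R] [IsNoetherianRing R] [IsLocalRing R]
    (hRcomp : IsAdicComplete (maximalIdeal R) R)
    (hres : Function.Bijective (algebraMap K (R ⧸ maximalIdeal R)))
    (R' : Type) [CommRing R'] [Algebra K R'] [IsNoetherianRing R'] [IsLocalRing R']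
    (hR'comp : IsAdicComplete (maximalIdeal R') R')
    (hres' : Function.Bijective (algebraMap K (R' ⧸ maximalIdeal R')))
    [Algebra R R'] [IsScalarTower K R R']
    (C : Type) [CommRing C] [Algebra K C]
    (A : Type) [Ring A] [Algebra K A] [Algebra R A] [IsScalarTower K R A]
    (hflat : Module.Flat R A) (hcomp : IsAdicComplete (maximalIdeal R) A)
    (π : A →ₐ[K] C) (hsurj : Function.Surjective π)
    (hker : ∀ a : A, π a = 0 ↔ a ∈ (maximalIdeal R • ⊤ : Submodule R A)) :
    ∃ (θ : R' →+* ↥(bcLimit R R' A)) (ρ : A →+* ↥(bcLimit R R' A))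
      (π' : ↥(bcLimit R R' A) →+* C),
      -- θ is the canonical structural homomorphism, and it is central, so that A' is an
      -- associative unital R'-algebra:
      (∀ (r' : R') (i : ℕ),
        ((θ r' : ∀ j, BCLevel R R' A j) i)
          = (Ideal.Quotient.mk (maximalIdeal R' ^ (i + 1)) r') ⊗ₜ[R] (1 : A)) ∧
      (∀ (r' : R') (x : ↥(bcLimit R R' A)), θ r' * x = x * θ r') ∧
      -- ρ is the canonical map A → A':
      (∀ (a : A) (i : ℕ),
        ((ρ a : ∀ j, BCLevel R R' A j) i)
          = (1 : R' ⧸ (maximalIdeal R' ^ (i + 1))) ⊗ₜ[R] a) ∧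
      -- ρ is an R-algebra homomorphism:
      (∀ r : R, ρ (algebraMap R A r) = θ (algebraMap R R' r)) ∧
      -- A' is flat and 𝔪'-adically complete as an R'-module:
      (@Module.Flat R' ↥(bcLimit R R' A) _ _ (Module.compHom _ θ)) ∧
      (@IsAdicComplete R' _ (maximalIdeal R') ↥(bcLimit R R' A) _ (Module.compHom _ θ)) ∧
      -- π' is the canonical R'-algebra homomorphism A' → C induced by π (it is K-linear and
      -- commutes with the augmentations), it is surjective, and its kernel is 𝔪'A':
      (∀ k : K, π' (θ (algebraMap K R' k)) = algebraMap K C k) ∧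
      (∀ a : A, π' (ρ a) = π a) ∧
      Function.Surjective π' ∧
      (∀ x : ↥(bcLimit R R' A), π' x = 0 ↔
        x ∈ AddSubgroup.closure
          {y : ↥(bcLimit R R' A) | ∃ m' ∈ maximalIdeal R', ∃ z, y = θ m' * z}) := by
  obtain ⟨κ, hκ, hκ0⟩ := exists_residue hres
  obtain ⟨κ', hκ', hκ'0⟩ := exists_residue hres'
  -- both sides are `K`-algebra homomorphisms `R → K`; in particular `R → R'` is local
  have hcompat : ∀ r, κ' (algebraMap R R' r) = κ r :=
    residue_unique κ (κ'.comp (algebraMap R R')) hκ (fun k => by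
      rw [RingHom.comp_apply, ← IsScalarTower.algebraMap_apply, hκ'])
  have hRR' : ∀ r ∈ maximalIdeal R, algebraMap R R' r ∈ maximalIdeal R' := fun r hr => by
    rw [← hκ'0, hcompat, hκ0]; exact hr
  have hπ : ∀ r, π (algebraMap R A r) = algebraMap K C (κ' (algebraMap R R' r)) := by
    intro r
    rw [hcompat, ← π.commutes, IsScalarTower.algebraMap_apply K R A, ← sub_eq_zero, ← map_sub,
      ← map_sub, hker, Algebra.algebraMap_eq_smul_one]
    exact Submodule.smul_mem_smul ((hκ0 _).1 (by rw [map_sub, hκ, sub_self])) trivial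
  let c := Module.Basis.ofVectorSpace K C
  choose a ha using fun b => hsurj (c b)
  choose κi ε β hκi hε hβ using
    exists_levelBasis κ' hκ' hRR' π (fun a h => (hker a).1 h) hπ c a ha
  let θ : R' →+* bcLimit R R' A := RingHom.codRestrict
    (RingHom.pi fun i => (Algebra.TensorProduct.includeLeftRingHom).comp
      (Ideal.Quotient.mk (maximalIdeal R' ^ (i + 1)))) _
    (fun r i => bcTransition_tmul i r 1)
  let ρ : A →+* bcLimit R R' A := RingHom.codRestrict
    (RingHom.pi fun i => (Algebra.TensorProduct.includeRight :
      A →ₐ[R] BCLevel R R' A i).toRingHom) _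
    (fun x i => bcTransition_tmul i 1 x)
  let π' : bcLimit R R' A →+* C :=
    (ε 0).comp ((Pi.evalRingHom (fun i => BCLevel R R' A i) 0).comp (bcLimit R R' A).subtype)
  have hθ : ∀ r i, (θ r).1 i = Ideal.Quotient.mk (maximalIdeal R' ^ (i + 1)) r ⊗ₜ[R] (1 : A) :=
    fun _ _ => rfl
  have hρ : ∀ x i, (ρ x).1 i = (1 : R' ⧸ maximalIdeal R' ^ (i + 1)) ⊗ₜ[R] x := fun _ _ => rfl
  have hπ' : ∀ x, π' x = ε 0 (x.1 0) := fun _ => rfl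
  have hθmul : ∀ r (x : bcLimit R R' A) i,
      (θ r * x).1 i = Ideal.Quotient.mk (maximalIdeal R' ^ (i + 1)) r • x.1 i :=
    fun r x i => tmul_one_mul_eq_smul _ _
  have hπρ : ∀ x, π' (ρ x) = π x := fun x => by
    rw [hπ', hρ, hε, map_one, map_one, one_mul]
  let inst : Module R' (bcLimit R R' A) := Module.compHom _ θ
  obtain ⟨e, he⟩ := exists_nullSeq_equiv hR'comp β hβ hθmul
  refine ⟨θ, ρ, π', hθ, fun r x => ?_, hρ, fun r => ?_, ?_, ?_, fun k => ?_, hπρ, fun y => ?_,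
    fun x => ?_⟩
  · refine Subtype.ext (funext fun i => ?_)
    exact (hθmul r x i).trans (mul_tmul_one_eq_smul _ _).symm
  · refine Subtype.ext (funext fun i => ?_)
    rw [hρ, hθ, Algebra.algebraMap_eq_smul_one, TensorProduct.tmul_smul,
      TensorProduct.smul_tmul', ← Algebra.algebraMap_eq_smul_one]
    rfl
  · have := nullSeq_flat hR'comp.toIsHausdorff (Module.Basis.ofVectorSpaceIndex K C)
    exact Module.Flat.of_linearEquiv e.symm
  · exact isAdicComplete_of_equiv e.symm (nullSeq_isAdicComplete hR'comp _)
  · rw [hπ', hθ, hε, hκi, hκ', map_one, mul_one]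
  · obtain ⟨x, rfl⟩ := hsurj y
    exact ⟨ρ x, hπρ x⟩
  · have hε0 : ∀ s y, ε 0 (s • y) = κi 0 s • ε 0 y := by
      intro s y
      rw [← tmul_one_mul_eq_smul, map_mul, hε, map_one, mul_one, Algebra.smul_def]
    have hεβ : ∀ b, ε 0 (β 0 b) = c b := fun b => by
      rw [hβ, hε, map_one, map_one, one_mul, ha]
    obtain ⟨g, rfl⟩ := e.surjective x
    have h1 : π' (e g) = 0 ↔ e g ∈ (maximalIdeal R' • ⊤ : Submodule R' (bcLimit R R' A)) := by
      rw [← mem_smul_top_iff_of_equiv,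
        mem_smul_top_nullSeq hR'comp.toIsHausdorff, ← c.repr.map_eq_zero_iff, Finsupp.ext_iff]
      refine forall_congr' fun b => ?_
      rw [hπ', Finsupp.zero_apply, ← hκ'0, ← hκi 0, ← he g 0 b]
      exact Eq.congr_left
        (repr_map_of_semilinear (κi 0) (β 0) c (ε 0).toAddMonoidHom hε0 hεβ _ b)
    rw [h1]
    constructor
    · intro h
      generalize e g = x at h
      induction h using Submodule.smul_induction_on' with
      | smul r hr z _ => exact AddSubgroup.subset_closure ⟨r, hr, z, rfl⟩
      | add y _ z _ hy hz => exact add_mem hy hz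
    · intro h
      refine (AddSubgroup.closure_le
        (maximalIdeal R' • ⊤ : Submodule R' (bcLimit R R' A)).toAddSubgroup).2 ?_ h
      rintro _ ⟨r, hr, z, rfl⟩
      exact Submodule.smul_mem_smul (N := (⊤ : Submodule R' (bcLimit R R' A))) hr
        (Submodule.mem_top (x := z))
end

section
/- Let K be a field, (R, 𝔪) a parameter K-algebra, C a commutative K-algebra, (A, π) an associative R-deformation of C, s ∈ C, C' := C[s^{-1}] the localization of C at s, and τ : C → C' the localization homomorphism. Then there exist an associative R-deformation (A', π') of C' and an R-algebra homomorphism g : A → A' with π' ∘ g = τ ∘ π, such that moreover the following universal property holds: for every commutative K-algebra C'', every ring homomorphism τ' : C' → C'', every associative R-deformation (A'', π'') of C'', and every R-algebra homomorphism h : A → A'' with π'' ∘ h = τ' ∘ τ ∘ π, there is a unique R-algebra homomorphism g' : A' → A'' with h = g' ∘ g. -/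
/-!
The algebra `A'` is the `𝔪`-adic completion `N` of the localization of the `R`-module `A` at left
multiplication by a lift `s₁` of `s` (`exists_isCompletedLocalization`). No Ore condition is needed:
the localization is taken of modules only, and the ring structure is built on the completion.

Left multiplication by `s₁` extends to an automorphism `t` of `N`, and right multiplications extend
to a right action of `A` on `N` (`exists_rightAction`). Since `C` is commutative, commutators in `A`
lie in `𝔪 A`, so right multiplication by `s₁` agrees with `t` modulo `𝔪`; by completeness it is
bijective on `N` (`rightAction_bijective`). A right action of `A` on any complete module `Y` on which
`s₁` is bijective extends to `N` (`exists_extendedAction`). For `Y = N` this gives the product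
of `N`, and associativity is an instance of the uniqueness principle (`extendedAction_mul`,
`IsCompletedLocalization.ext`). For a complete algebra `X` with a map `f` from `A` such that `f s₁` is
invertible, the action of `A` on `X` through `f` extends to `N`, and this gives the unique extension
of `f` to `N` (`exists_localized_algebra`). Taking `X = C'` gives the augmentation of `N`, and taking
`X = A''` gives the universal property, because an element of `A''` that is invertible modulo `𝔪` is
invertible (`isUnit_of_isUnit_map`).

Flatness of `N`: the localization `M` is flat by the equational criterion (`flat_of_localization`).
For the completion of a flat module over a noetherian ring, Artin–Rees, transferred from the ring to
flat modules (`exists_approx_of_flat`), allows a linear relation in the completion to be resolved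
approximately with coefficients of controlled order, which converge (`flat_of_complete_of_approx`).
-/

/-- An associative `R`-deformation of the commutative `K`-algebra `C`: an associative unital
`R`-algebra which is flat and `𝔪`-adically complete as an `R`-module, together with a surjective
augmentation to `C` (an `R`-algebra homomorphism, where `R` acts on `C` through `R/𝔪 = K`)
whose kernel is `𝔪A`. -/
structure AssocDeformation (K R C : Type) [Field K] [CommRing R] [Algebra K R]
    [IsLocalRing R] [CommRing C] [Algebra K C] : Type 1 where
  carrier : Type
  [ring : Ring carrier]
  [algK : Algebra K carrier]
  [algR : Algebra R carrier]
  [tower : IsScalarTower K R carrier]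
  flat : Module.Flat R carrier
  complete : IsAdicComplete (IsLocalRing.maximalIdeal R) carrier
  aug : carrier →ₐ[K] C
  surj : Function.Surjective aug
  ker : ∀ a : carrier, aug a = 0 ↔
    a ∈ (IsLocalRing.maximalIdeal R • ⊤ : Submodule R carrier)

attribute [instance] AssocDeformation.ring AssocDeformation.algK AssocDeformation.algR
  AssocDeformation.tower

/-! ### Localization of a module at an endomorphism -/

open Polynomial in
/-- The localization `M` of an `R`-module `A` at an endomorphism `L`: it is `A[X⁻¹]`, where the
variable `X` of `R[X]` acts on `A` by `L`. The map `j : A → M` is the localization map, and `t` is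
the automorphism of `M` that extends `L`. The last clause is the universal property, for modules
equipped with an automorphism. -/
theorem exists_localization {R A : Type} [CommRing R] [AddCommGroup A] [Module R A]
    (L : A →ₗ[R] A) :
    ∃ (M : Type) (_ : AddCommGroup M) (_ : Module R M) (j : A →ₗ[R] M) (t : M ≃ₗ[R] M),
      (∀ a, t (j a) = j (L a)) ∧ (∀ m, ∃ (k : ℕ) (a : A), (t ^ k) m = j a) ∧
      (∀ a, j a = 0 → ∃ k : ℕ, (L ^ k) a = 0) ∧
      ∀ (X : Type) [AddCommGroup X] [Module R X] (φ : A →ₗ[R] X) (U : X ≃ₗ[R] X),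
        (∀ a, φ (L a) = U (φ a)) →
        ∃ Φ : M →ₗ[R] X, (∀ a, Φ (j a) = φ a) ∧ ∀ m, Φ (t m) = U (Φ m) := by
  let S : Submonoid R[X] := Submonoid.powers (X : R[X])
  let P := Module.AEval' L
  let M := LocalizedModule S P
  let j' : P →ₗ[R[X]] M := LocalizedModule.mkLinearMap S P
  let j : A →ₗ[R] M := (j'.restrictScalars R) ∘ₗ (Module.AEval'.of L).toLinearMap
  let xS : S := ⟨X, Submonoid.mem_powers _⟩
  have hX : IsUnit (algebraMap R[X] (Module.End R[X] M) X) :=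
    IsLocalizedModule.map_units (S := S) j' xS
  let t' : M →ₗ[R] M := (algebraMap R[X] (Module.End R[X] M) X).restrictScalars R
  have ht' : Function.Bijective t' := (Module.End.isUnit_iff (algebraMap R[X] (Module.End R[X] M) X)).1 hX
  let t : M ≃ₗ[R] M := LinearEquiv.ofBijective t' ht'
  have htX : ∀ m, t m = (X : R[X]) • m := fun m => rfl
  have htk : ∀ (k : ℕ) m, (t ^ k) m = (X ^ k : R[X]) • m := by
    intro k
    induction k with
    | zero => intro m; simp
    | succ k ih => intro m; rw [pow_succ, pow_succ, mul_smul, ← htX, ← ih]; rfl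
  have hj : ∀ a, t (j a) = j (L a) := by
    intro a
    rw [htX]
    simp only [j, LinearMap.comp_apply, LinearMap.restrictScalars_apply, ← map_smul,
      LinearEquiv.coe_coe]
    rw [Module.AEval'.X_smul_of]
  refine ⟨M, inferInstance, inferInstance, j, t, hj, ?_, ?_, ?_⟩
  · intro m
    obtain ⟨⟨a, s⟩, h⟩ := IsLocalizedModule.surj S j' m
    obtain ⟨k, hk⟩ := s.2
    refine ⟨k, (Module.AEval'.of L).symm a, ?_⟩
    rw [htk]
    have : (X : R[X]) ^ k = s := hk
    rw [this]
    rw [← Submonoid.smul_def, h]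
    simp [j]
  · intro a ha
    obtain ⟨s, hs⟩ := (IsLocalizedModule.eq_zero_iff S j').1 ha
    obtain ⟨k, hk⟩ := s.2
    refine ⟨k, ?_⟩
    have h1 : (X : R[X]) ^ k = s := hk
    have h2 : (X ^ k : R[X]) • (Module.AEval'.of L a) = 0 := by rw [h1]; exact hs
    rw [Module.AEval'.X_pow_smul_of] at h2
    simpa using h2
  · intro Y _ _ φ U h
    let Y' := Module.AEval' U.toLinearMap
    let φ' : P →ₗ[R[X]] Y' := LinearMap.ofAEval L ((Module.AEval'.of U.toLinearMap).toLinearMap ∘ₗ φ)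
      (by
        intro a
        change Module.AEval'.of U.toLinearMap (φ (L a)) =
          (X : R[X]) • Module.AEval'.of U.toLinearMap (φ a)
        rw [h, Module.AEval'.X_smul_of]
        rfl)
    have hφ' : ∀ a, φ' (Module.AEval'.of L a) = Module.AEval'.of U.toLinearMap (φ a) := fun a => rfl
    have hu : ∀ x : S, IsUnit (algebraMap R[X] (Module.End R[X] Y') x) := by
      rintro ⟨_, k, rfl⟩
      simp only [map_pow]
      refine IsUnit.pow k ((Module.End.isUnit_iff _).2 ?_)
      have : ⇑(algebraMap R[X] (Module.End R[X] Y') X) =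
          fun y => Module.AEval'.of U.toLinearMap (U ((Module.AEval'.of U.toLinearMap).symm y)) := by
        funext y
        obtain ⟨y, rfl⟩ := (Module.AEval'.of U.toLinearMap).surjective y
        rw [Module.algebraMap_end_apply, Module.AEval'.X_smul_of]
        simp
      rw [this]
      exact (Module.AEval'.of U.toLinearMap).bijective.comp
        (U.bijective.comp (Module.AEval'.of U.toLinearMap).symm.bijective)
    let Φ' : M →ₗ[R[X]] Y' := LocalizedModule.lift S φ' hu
    have hΦ' : ∀ a, Φ' (j' a) = φ' a := fun a =>
      congrArg (fun f => f a) (LocalizedModule.lift_comp S φ' hu)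
    refine ⟨(Module.AEval'.of U.toLinearMap).symm.toLinearMap ∘ₗ Φ'.restrictScalars R, ?_, ?_⟩
    · intro a
      simp only [j, LinearMap.comp_apply, LinearMap.restrictScalars_apply, LinearEquiv.coe_coe, hΦ',
        hφ', LinearEquiv.symm_apply_apply]
    · intro m
      simp only [LinearMap.comp_apply, LinearMap.restrictScalars_apply, LinearEquiv.coe_coe]
      rw [htX, map_smul, Module.AEval'.of_symm_X_smul]
      rfl

/-! ### Flatness of completions over noetherian rings -/

/-- Localization at an endomorphism preserves flatness. A linear relation in `M` is carried by a
power of the automorphism `t` to a relation that already holds in `A`; there the equational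
criterion applies, and the result is transported back by the inverse power of `t`. -/
theorem flat_of_localization {R A M : Type} [CommRing R] [AddCommGroup A] [Module R A]
    [AddCommGroup M] [Module R M] [Module.Flat R A] (L : A →ₗ[R] A) (j : A →ₗ[R] M) (t : M ≃ₗ[R] M)
    (hj : ∀ a, t (j a) = j (L a)) (hsurj : ∀ m, ∃ (k : ℕ) (a : A), (t ^ k) m = j a)
    (hker : ∀ a, j a = 0 → ∃ k : ℕ, (L ^ k) a = 0) : Module.Flat R M := by
  have hjk : ∀ (k : ℕ) a, (t ^ k) (j a) = j ((L ^ k) a) := by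
    intro k
    induction k with
    | zero => intro a; simp
    | succ k ih =>
      intro a
      rw [pow_succ, pow_succ, LinearEquiv.mul_apply, hj, ih, Module.End.mul_apply]
  refine Module.Flat.of_forall_isTrivialRelation ?_
  intro l f x hx
  choose k a hka using fun i => hsurj (x i)
  -- A common denominator `t ^ e` for all the elements `x i`.
  let e := ∑ i, k i
  have he : ∀ i, (t ^ e) (x i) = j ((L ^ (e - k i)) (a i)) := by
    intro i
    have hle : k i ≤ e := Finset.single_le_sum (fun _ _ => Nat.zero_le _) (Finset.mem_univ i)
    rw [← hjk, ← hka, ← LinearEquiv.mul_apply, ← pow_add, Nat.sub_add_cancel hle]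
  have h0 : j (∑ i, f i • (L ^ (e - k i)) (a i)) = 0 := by
    rw [map_sum]
    simp_rw [map_smul, ← he]
    simp_rw [← map_smul]
    rw [← map_sum, hx, map_zero]
  obtain ⟨d, hd⟩ := hker _ h0
  rw [map_sum] at hd
  simp_rw [map_smul] at hd
  obtain ⟨p, c, y, hc, hy⟩ := Module.Flat.isTrivialRelation_of_sum_smul_eq_zero hd
  replace hc : ∀ i, (L ^ d) ((L ^ (e - k i)) (a i)) = ∑ q, c i q • y q := hc
  refine ⟨p, c, fun q => (t ^ (d + e)).symm (j (y q)), fun i => ?_, hy⟩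
  have h1 : (t ^ (d + e)) (x i) = ∑ q, c i q • j (y q) := by
    rw [pow_add, LinearEquiv.mul_apply, he, hjk, hc, map_sum]
    simp_rw [map_smul]
  rw [← LinearEquiv.symm_apply_apply (t ^ (d + e)) (x i), h1, map_sum]
  simp_rw [map_smul]

/-- Write a tuple in `I M` whose combination with coefficients `r` lies in `J M` as a combination,
with coefficients in `M`, of tuples `x k` in `I` for which `∑ i, r i * x k i` lies in `J`. This
reduces the statement `exists_approx_of_flat` about flat modules to the ring itself. -/
theorem exists_decomposition_of_flat {R M : Type} [CommRing R] [AddCommGroup M] [Module R M]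
    [Module.Flat R M] {n : ℕ} (r : Fin n → R) (I J : Ideal R) (m : Fin n → M)
    (hm : ∀ i, m i ∈ (I • ⊤ : Submodule R M)) (h : ∑ i, r i • m i ∈ (J • ⊤ : Submodule R M)) :
    ∃ (p : ℕ) (x : Fin p → Fin n → R) (y : Fin p → M), (∀ i, m i = ∑ k, x k i • y k) ∧
      (∀ k i, x k i ∈ I) ∧ ∀ k, ∑ i, r i * x k i ∈ J := by
  classical
  have key : ∀ (I : Ideal R) (x : M), x ∈ (I • ⊤ : Submodule R M) →
      ∃ a : M →₀ R, (∀ y, a y ∈ I) ∧ (a.sum fun y c => c • y) = x := by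
    intro I x hx
    have : (⊤ : Submodule R M) = Submodule.span R (Set.range (id : M → M)) := by simp
    rw [this] at hx
    obtain ⟨a, ha, hax⟩ := (Submodule.mem_ideal_smul_span_iff_exists_sum I id x).1 hx
    exact ⟨a, ha, hax⟩
  choose a haI ha using fun i => key I _ (hm i)
  obtain ⟨b, hbJ, hb⟩ := key J _ h
  let T : Finset M := (Finset.univ.biUnion fun i => (a i).support) ∪ b.support
  have ha' : ∀ i, m i = ∑ y : T, a i y • (y : M) := by
    intro i
    rw [← ha i, Finset.sum_coe_sort T fun y => a i y • y]
    refine Finsupp.sum_of_support_subset _ ?_ _ (by simp)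
    exact (Finset.subset_biUnion_of_mem (fun i => (a i).support) (Finset.mem_univ i)).trans
      Finset.subset_union_left
  have hb' : ∑ i, r i • m i = ∑ y : T, b y • (y : M) := by
    rw [← hb, Finset.sum_coe_sort T fun y => b y • y]
    exact Finsupp.sum_of_support_subset _ Finset.subset_union_right _ (by simp)
  -- Comparing the two expressions of `∑ i, r i • m i` gives a relation in the flat module `M`.
  have hrel : ∑ y : T, (∑ i, r i * a i y - b y) • (y : M) = 0 := by
    simp_rw [sub_smul, Finset.sum_sub_distrib, ← hb', ha', Finset.sum_smul, Finset.smul_sum,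
      mul_smul]
    rw [Finset.sum_comm, sub_self]
  obtain ⟨p, c, z, hc, hz⟩ := Module.Flat.isTrivialRelation_of_sum_smul_eq_zero hrel
  refine ⟨p, fun k i => ∑ y : T, a i y * c y k, z, fun i => ?_, fun k i => ?_, fun k => ?_⟩
  · rw [ha' i]
    simp_rw [Finset.sum_smul]
    rw [Finset.sum_comm]
    refine Finset.sum_congr rfl fun y _ => ?_
    rw [← Finset.sum_congr rfl fun k _ => (smul_smul (a i y) (c y k) (z k)), ← Finset.smul_sum,
      ← hc y]
  · exact Ideal.sum_mem _ fun y _ => Ideal.mul_mem_right _ _ (haI i y)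
  · have : ∑ i, r i * ∑ y : T, a i y * c y k = ∑ y : T, b y * c y k := by
      have h1 := hz k
      simp_rw [sub_mul, Finset.sum_sub_distrib, sub_eq_zero, Finset.sum_mul] at h1
      rw [← h1, Finset.sum_comm]
      simp_rw [Finset.mul_sum, mul_assoc]
    rw [this]
    exact Ideal.sum_mem _ fun y _ => Ideal.mul_mem_right _ _ (hbJ y)

/-- Artin–Rees for the map `f : Rⁿ → R` with coefficients `r`: if `x ∈ I ^ l Rⁿ` and
`f x ∈ I ^ (l + 1 + c)`, then modulo `I ^ (l + 1)` the tuple `x` is a combination of fixed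
generators `z` of the syzygies of `r`, with coefficients in `I ^ (l - c)`. The subtraction is
truncated: for `l ≤ c` the coefficients are unrestricted. -/
theorem exists_artinRees_constant {R : Type} [CommRing R] [IsNoetherianRing R] (I : Ideal R)
    {n : ℕ} (r : Fin n → R) :
    ∃ (p : ℕ) (z : Fin p → Fin n → R) (c : ℕ), (∀ q, ∑ i, r i * z q i = 0) ∧
      ∀ (l : ℕ) (x : Fin n → R), (∀ i, x i ∈ I ^ l) → ∑ i, r i * x i ∈ I ^ (l + 1 + c) →
        ∃ w : Fin p → R, (∀ q, w q ∈ I ^ (l - c)) ∧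
          ∀ i, x i - ∑ q, w q * z q i ∈ I ^ (l + 1) := by
  let f : (Fin n → R) →ₗ[R] R := ∑ i, r i • LinearMap.proj i
  have hf : ∀ x, f x = ∑ i, r i * x i := fun x => by simp [f]
  have hpi : ∀ (J : Ideal R) (x : Fin n → R),
      x ∈ (J • ⊤ : Submodule R (Fin n → R)) ↔ ∀ i, x i ∈ J := by
    intro J x
    constructor
    · intro hx i
      have := Submodule.mem_map_of_mem (f := LinearMap.proj (R := R) i) hx
      rw [Submodule.map_smul''] at this
      have h2 := smul_mono_right J (le_top (a := Submodule.map (LinearMap.proj i) ⊤)) this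
      simpa using h2
    · intro hx
      rw [pi_eq_sum_univ' x]
      exact Submodule.sum_mem _ fun i _ => Submodule.smul_mem_smul (hx i) trivial
  obtain ⟨p, z, hz⟩ := Submodule.fg_iff_exists_fin_generating_family.1
    (IsNoetherian.noetherian (LinearMap.ker f))
  -- Artin–Rees is used twice: for the image of `f`, to replace `x` by an element of the kernel, and
  -- for the kernel of `f`, to bound the coefficients.
  obtain ⟨c₁, hc₁⟩ := I.exists_pow_inf_eq_pow_smul (LinearMap.range f)
  obtain ⟨c₂, hc₂⟩ := I.exists_pow_inf_eq_pow_smul (LinearMap.ker f)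
  refine ⟨p, z, c₁ + c₂, fun q => ?_, fun l x hx hrx => ?_⟩
  · rw [← hf]
    exact LinearMap.mem_ker.1 (hz ▸ Submodule.subset_span ⟨q, rfl⟩)
  obtain ⟨e, he, hfe⟩ : ∃ e ∈ (I ^ (l + 1) • ⊤ : Submodule R (Fin n → R)), f e = f x := by
    have h1 : f x ∈ (I ^ (l + 1 + (c₁ + c₂)) • ⊤ ⊓ LinearMap.range f : Submodule R R) :=
      ⟨by rw [hf]; simpa using hrx, x, rfl⟩
    rw [hc₁ _ (by omega)] at h1
    have h2 : f x ∈ I ^ (l + 1) • LinearMap.range f :=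
      Submodule.smul_mono (Ideal.pow_le_pow_right (by omega)) inf_le_right h1
    rw [LinearMap.range_eq_map, ← Submodule.map_smul''] at h2
    exact h2
  have hxe : x - e ∈ I ^ (l - (c₁ + c₂)) • LinearMap.ker f := by
    have hker : x - e ∈ LinearMap.ker f := by rw [LinearMap.mem_ker, map_sub, hfe, sub_self]
    by_cases hl : l ≤ c₁ + c₂
    · rw [Nat.sub_eq_zero_of_le hl, pow_zero, Ideal.one_eq_top, Submodule.top_smul]
      exact hker
    · have h1 : x - e ∈ (I ^ l • ⊤ ⊓ LinearMap.ker f : Submodule R (Fin n → R)) := by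
        refine ⟨Submodule.sub_mem _ ((hpi _ _).2 hx) ?_, hker⟩
        exact Submodule.smul_mono_left (Ideal.pow_le_pow_right (by omega)) he
      rw [hc₂ _ (by omega)] at h1
      exact Submodule.smul_mono (Ideal.pow_le_pow_right (by omega)) inf_le_right h1
  rw [← hz] at hxe
  obtain ⟨w, hw, hwx⟩ := (Submodule.mem_ideal_smul_span_iff_exists_sum _ z _).1 hxe
  refine ⟨w, hw, fun i => ?_⟩
  have : x i - ∑ q, w q * z q i = e i := by
    have h1 := congrFun hwx i
    rw [Finsupp.sum_fintype _ _ (by simp)] at h1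
    simp only [Finset.sum_apply, Pi.smul_apply, smul_eq_mul, Pi.sub_apply] at h1
    rw [h1]; ring
  rw [this]
  exact (hpi _ _).1 he i

/-- The approximation of `exists_artinRees_constant` in an arbitrary flat module, with the same
syzygies `z` and the same constant `c` for all modules. -/
theorem exists_approx_of_flat {R : Type} [CommRing R] [IsNoetherianRing R] (I : Ideal R)
    {n : ℕ} (r : Fin n → R) :
    ∃ (p : ℕ) (z : Fin p → Fin n → R) (c : ℕ), (∀ q, ∑ i, r i * z q i = 0) ∧
      ∀ (M : Type) [AddCommGroup M] [Module R M] [Module.Flat R M] (l : ℕ) (m : Fin n → M),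
        (∀ i, m i ∈ (I ^ l • ⊤ : Submodule R M)) →
        ∑ i, r i • m i ∈ (I ^ (l + 1 + c) • ⊤ : Submodule R M) →
        ∃ y : Fin p → M, (∀ q, y q ∈ (I ^ (l - c) • ⊤ : Submodule R M)) ∧
          ∀ i, m i - ∑ q, z q i • y q ∈ (I ^ (l + 1) • ⊤ : Submodule R M) := by
  obtain ⟨p, z, c, hz, H⟩ := exists_artinRees_constant I r
  refine ⟨p, z, c, hz, fun M _ _ _ l m hm hrm => ?_⟩
  obtain ⟨d, x, y, hmx, hx, hrx⟩ := exists_decomposition_of_flat r _ _ m hm hrm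
  choose w hw hxw using fun k => H l (x k) (hx k) (hrx k)
  refine ⟨fun q => ∑ k, w k q • y k, fun q => ?_, fun i => ?_⟩
  · exact Submodule.sum_mem _ fun k _ => Submodule.smul_mem_smul (hw k q) trivial
  · have : m i - ∑ q, z q i • ∑ k, w k q • y k = ∑ k, (x k i - ∑ q, w k q * z q i) • y k := by
      rw [hmx]
      simp_rw [sub_smul, Finset.sum_sub_distrib, Finset.sum_smul, Finset.smul_sum, smul_smul]
      rw [Finset.sum_comm]
      simp_rw [mul_comm]
    rw [this]
    exact Submodule.sum_mem _ fun k _ => Submodule.smul_mem_smul (hxw k i) trivial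

theorem apply_mem_pow_smul_top {R M N : Type} [CommRing R] {I : Ideal R}
    [AddCommGroup M] [Module R M] [AddCommGroup N] [Module R N] (f : M →ₗ[R] N) {k : ℕ} {m : M}
    (hm : m ∈ (I ^ k • ⊤ : Submodule R M)) : f m ∈ (I ^ k • ⊤ : Submodule R N) := by
  have := Submodule.mem_map_of_mem (f := f) hm
  rw [Submodule.map_smul''] at this
  exact Submodule.smul_mono le_rfl le_top this

theorem eq_zero_of_forall_mem {R N : Type} [CommRing R] (I : Ideal R)
    [AddCommGroup N] [Module R N] [IsHausdorff I N] {x : N}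
    (h : ∀ k : ℕ, x ∈ (I ^ k • ⊤ : Submodule R N)) : x = 0 :=
  IsHausdorff.haus (inferInstance : IsHausdorff I N) _ fun k => SModEq.zero.2 (h k)

/-- Let `j : M → N` have dense image, with the `I`-adic topology of `M` induced by that of `N`. If
`M` is flat and `N` is complete, then `N` is flat. A relation `∑ i, r i • x i = 0` in `N` is
resolved by successive approximation: `step` pulls the current remainder back to `M` and splits off a
combination of the syzygies `z` of `r`; the coefficients then converge in `N`. -/
theorem flat_of_complete_of_approx {R M N : Type} [CommRing R] [IsNoetherianRing R] (I : Ideal R)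
    [AddCommGroup M] [Module R M] [Module.Flat R M] [AddCommGroup N] [Module R N]
    [IsAdicComplete I N] (j : M →ₗ[R] N)
    (hdense : ∀ (k : ℕ) n, ∃ m, n - j m ∈ (I ^ k • ⊤ : Submodule R N))
    (hstrict : ∀ (k : ℕ) m, j m ∈ (I ^ k • ⊤ : Submodule R N) → m ∈ (I ^ k • ⊤ : Submodule R M)) :
    Module.Flat R N := by
  have hle : ∀ {a b : ℕ}, a ≤ b → (I ^ b • ⊤ : Submodule R N) ≤ I ^ a • ⊤ := fun h =>
    Submodule.smul_mono_left (Ideal.pow_le_pow_right h)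
  refine Module.Flat.of_forall_isTrivialRelation ?_
  intro n r x hx
  obtain ⟨p, z, c, hz, H⟩ := exists_approx_of_flat I r
  have step : ∀ (l : ℕ) (m : Fin n → N), (∀ i, m i ∈ (I ^ l • ⊤ : Submodule R N)) →
      ∑ i, r i • m i = 0 →
      ∃ y : Fin p → N, (∀ q, y q ∈ (I ^ (l - c) • ⊤ : Submodule R N)) ∧
        ∀ i, m i - ∑ q, z q i • y q ∈ (I ^ (l + 1) • ⊤ : Submodule R N) := by
    intro l m hm hr
    choose m' hm' using fun i => hdense (l + 1 + c) (m i)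
    obtain ⟨y, hy, hmy⟩ := H M l m'
      (fun i => hstrict _ _ (by
        have := Submodule.sub_mem _ (hm i) (hle (show l ≤ l + 1 + c by omega) (hm' i))
        simpa using this))
      (hstrict _ _ (by
        have h1 : ∑ i, r i • (m i - j (m' i)) ∈ (I ^ (l + 1 + c) • ⊤ : Submodule R N) :=
          Submodule.sum_mem _ fun i _ => Submodule.smul_mem _ _ (hm' i)
        simp_rw [smul_sub, Finset.sum_sub_distrib, hr, zero_sub, neg_mem_iff, ← map_smul,
          ← map_sum] at h1
        exact h1))
    refine ⟨fun q => j (y q), fun q => apply_mem_pow_smul_top j (hy q), fun i => ?_⟩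
    have h1 := Submodule.add_mem _ (hle (show l + 1 ≤ l + 1 + c by omega) (hm' i))
      (apply_mem_pow_smul_top j (hmy i))
    rw [map_sub, map_sum] at h1
    simp_rw [map_smul] at h1
    simpa using h1
  choose! Y hY hmY using step
  -- `s l` is the remainder after `l` steps, and `F l` is the sum of the first `l` coefficients.
  let s : ℕ → Fin n → N := fun l =>
    Nat.rec x (fun l m => fun i => m i - ∑ q, z q i • Y l m q) l
  have hs : ∀ l i, s (l + 1) i = s l i - ∑ q, z q i • Y l (s l) q := fun l i => rfl
  have hinv : ∀ l, (∀ i, s l i ∈ (I ^ l • ⊤ : Submodule R N)) ∧ ∑ i, r i • s l i = 0 := by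
    intro l
    induction l with
    | zero => exact ⟨fun i => by simp, hx⟩
    | succ l ih =>
      refine ⟨fun i => hmY l (s l) ih.1 ih.2 i, ?_⟩
      simp_rw [hs, smul_sub, Finset.sum_sub_distrib, ih.2, zero_sub, neg_eq_zero, Finset.smul_sum,
        smul_smul]
      rw [Finset.sum_comm]
      simp_rw [← Finset.sum_smul, hz, zero_smul, Finset.sum_const_zero]
  let F : ℕ → Fin p → N := fun l q => ∑ d ∈ Finset.range l, Y d (s d) q
  have hF : ∀ l i, x i - ∑ q, z q i • F l q = s l i := by
    intro l i
    induction l with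
    | zero => simp [F, s]
    | succ l ih =>
      rw [hs, ← ih]
      simp_rw [F, Finset.sum_range_succ, smul_add, Finset.sum_add_distrib]
      abel
  -- The coefficient of step `d` lies in `I ^ (d - c) N`, hence the shift by `c`.
  have hlim : ∀ q, ∃ y : N, ∀ l, F (l + c) q ≡ y [SMOD (I ^ l • ⊤ : Submodule R N)] := by
    intro q
    refine IsPrecomplete.prec inferInstance ?_
    intro a b hab
    rw [SModEq.comm, SModEq.sub_mem]
    have : F (b + c) q - F (a + c) q = ∑ d ∈ Finset.Ico (a + c) (b + c), Y d (s d) q :=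
      (Finset.sum_Ico_eq_sub _ (by omega)).symm
    rw [this]
    refine Submodule.sum_mem _ fun d hd => ?_
    rw [Finset.mem_Ico] at hd
    exact hle (by omega) (hY d (s d) (hinv d).1 (hinv d).2 q)
  choose y hy using hlim
  refine ⟨p, fun i q => z q i, y, fun i => ?_, hz⟩
  rw [← sub_eq_zero]
  refine IsHausdorff.haus (inferInstance : IsHausdorff I N) _ fun l => ?_
  rw [SModEq.zero]
  have h1 : x i - ∑ q, z q i • y q = s (l + c) i + ∑ q, z q i • (F (l + c) q - y q) := by
    rw [← hF]
    simp_rw [smul_sub, Finset.sum_sub_distrib]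
    abel
  rw [h1]
  exact Submodule.add_mem _ (hle (by omega) ((hinv (l + c)).1 i))
    (Submodule.sum_mem _ fun q _ => Submodule.smul_mem _ _ (SModEq.sub_mem.1 (hy q l)))

theorem completion_dense {R M : Type} [CommRing R] (I : Ideal R) (hI : I.FG)
    [AddCommGroup M] [Module R M] (k : ℕ) (n : AdicCompletion I M) :
    ∃ m, n - AdicCompletion.of I M m ∈ (I ^ k • ⊤ : Submodule R (AdicCompletion I M)) := by
  obtain ⟨m, hm⟩ := Submodule.mkQ_surjective _ (AdicCompletion.eval I M k n)
  refine ⟨m, ?_⟩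
  rw [AdicCompletion.pow_smul_top_eq_ker_eval hI, LinearMap.mem_ker, map_sub,
    AdicCompletion.eval_of, hm, sub_self]

/-- The `I`-adic topology of `M` is induced by that of its completion. -/
theorem completion_strict {R M : Type} [CommRing R] (I : Ideal R) (hI : I.FG)
    [AddCommGroup M] [Module R M] (k : ℕ) (m : M)
    (h : AdicCompletion.of I M m ∈ (I ^ k • ⊤ : Submodule R (AdicCompletion I M))) :
    m ∈ (I ^ k • ⊤ : Submodule R M) := by
  rw [AdicCompletion.pow_smul_top_eq_ker_eval hI, LinearMap.mem_ker, AdicCompletion.eval_of] at h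
  simpa using h

/-- Universal property of the adic completion: linear maps from `M` to an `I`-adically complete
module `Y` extend uniquely to the completion of `M`. -/
theorem bijective_lcomp_of {R M Y : Type} [CommRing R] (I : Ideal R) (hI : I.FG)
    [AddCommGroup M] [Module R M] [AddCommGroup Y] [Module R Y] [IsAdicComplete I Y] :
    Function.Bijective (LinearMap.lcomp R Y (AdicCompletion.of I M)) := by
  constructor
  · rw [injective_iff_map_eq_zero]
    intro F hF
    refine LinearMap.ext fun n => ?_
    refine eq_zero_of_forall_mem I fun k => ?_
    obtain ⟨m, hm⟩ := completion_dense I hI k n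
    have h1 := apply_mem_pow_smul_top F hm
    rw [map_sub, show F (AdicCompletion.of I M m) = 0 from LinearMap.congr_fun hF m, sub_zero] at h1
    exact h1
  · intro f
    refine ⟨(AdicCompletion.ofLinearEquiv I Y).symm.toLinearMap ∘ₗ
      (AdicCompletion.map I f).restrictScalars R, ?_⟩
    ext m
    change (AdicCompletion.ofLinearEquiv I Y).symm
      (AdicCompletion.map I f (AdicCompletion.of I M m)) = f m
    rw [AdicCompletion.map_of, AdicCompletion.ofLinearEquiv_symm_of]

/-! ### The completed localization as a module -/

/-- `N`, with the map `ι : A → N` and the automorphism `t`, is the `I`-adic completion of the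
localization of the `R`-module `A` at its endomorphism `L`. The field `dense` says that, up to powers
of `t`, the image of `A` is dense. The field `lift` is the extension property for maps into
`Hom(Q, Y)` with `Y` complete, on which the automorphism is `ψ ↦ u ∘ ψ ∘ v`; it is stated in this
form so that completeness of `Hom(Q, Y)` is not needed. -/
structure IsCompletedLocalization {R A N : Type} [CommRing R] [AddCommGroup A] [Module R A]
    [AddCommGroup N] [Module R N] (I : Ideal R) (L : A →ₗ[R] A) (ι : A →ₗ[R] N) (t : N ≃ₗ[R] N) :
    Prop where
  complete : IsAdicComplete I N
  comm : ∀ a, t (ι a) = ι (L a)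
  dense : ∀ (k : ℕ) n, ∃ (j : ℕ) (a : A), (t ^ j) n - ι a ∈ (I ^ k • ⊤ : Submodule R N)
  lift : ∀ (Q Y : Type) [AddCommGroup Q] [Module R Q] [AddCommGroup Y] [Module R Y]
    [IsAdicComplete I Y] (φ : A →ₗ[R] Q →ₗ[R] Y) (u : Y ≃ₗ[R] Y) (v : Q ≃ₗ[R] Q),
    (∀ a q, φ (L a) q = u (φ a (v q))) →
    ∃ Φ : N →ₗ[R] Q →ₗ[R] Y, (∀ a q, Φ (ι a) q = φ a q) ∧ ∀ n q, Φ (t n) q = u (Φ n (v q))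

theorem exists_isCompletedLocalization {R A : Type} [CommRing R] [IsNoetherianRing R]
    (I : Ideal R) [AddCommGroup A] [Module R A] [Module.Flat R A] (L : A →ₗ[R] A) :
    ∃ (N : Type) (_ : AddCommGroup N) (_ : Module R N) (ι : A →ₗ[R] N) (t : N ≃ₗ[R] N),
      Module.Flat R N ∧ IsCompletedLocalization I L ι t := by
  obtain ⟨M, _, _, j, t, hj, hsurj, hker, hlift⟩ := exists_localization L
  have hI : I.FG := IsNoetherian.noetherian I
  have hflat : Module.Flat R M := flat_of_localization L j t hj hsurj hker
  have hcomp : IsAdicComplete I (AdicCompletion I M) := AdicCompletion.isAdicComplete hI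
  let T : AdicCompletion I M ≃ₗ[R] AdicCompletion I M :=
    (AdicCompletion.congr I t).restrictScalars R
  have hT : ∀ m, T (AdicCompletion.of I M m) = AdicCompletion.of I M (t m) := fun m =>
    AdicCompletion.map_of I t.toLinearMap m
  have hTk : ∀ (k : ℕ) m,
      (T ^ k) (AdicCompletion.of I M m) = AdicCompletion.of I M ((t ^ k) m) := by
    intro k
    induction k with
    | zero => intro m; rfl
    | succ k ih =>
      intro m
      rw [pow_succ, pow_succ, LinearEquiv.mul_apply, hT, ih, LinearEquiv.mul_apply]
  refine ⟨AdicCompletion I M, inferInstance, inferInstance, AdicCompletion.of I M ∘ₗ j, T,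
    flat_of_complete_of_approx I (AdicCompletion.of I M) (completion_dense I hI)
      (completion_strict I hI), hcomp, fun a => ?_, fun k n => ?_, ?_⟩
  · rw [LinearMap.comp_apply, hT, hj, LinearMap.comp_apply]
  · obtain ⟨m, hm⟩ := completion_dense I hI k n
    obtain ⟨d, a, hda⟩ := hsurj m
    refine ⟨d, a, ?_⟩
    rw [LinearMap.comp_apply, ← hda, ← hTk, ← map_sub]
    exact apply_mem_pow_smul_top (T ^ d).toLinearMap hm
  · intro Q Y _ _ _ _ _ φ u v hφ
    obtain ⟨Ψ, hΨ, hΨt⟩ := hlift (Q →ₗ[R] Y) φ (LinearEquiv.arrowCongr v.symm u) (by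
      intro a
      ext q
      simp [hφ])
    have hE := bijective_lcomp_of (M := M) (Y := Y) I hI
    let E := LinearEquiv.ofBijective _ hE
    let Φ : AdicCompletion I M →ₗ[R] Q →ₗ[R] Y := (E.symm.toLinearMap ∘ₗ Ψ.flip).flip
    have hΦ : ∀ m q, Φ (AdicCompletion.of I M m) q = Ψ m q := by
      intro m q
      exact LinearMap.congr_fun (LinearEquiv.apply_symm_apply E (Ψ.flip q)) m
    refine ⟨Φ, fun a q => ?_, fun n q => ?_⟩
    · rw [LinearMap.comp_apply, hΦ, hΨ]
    · have : Φ.flip q ∘ₗ T.toLinearMap = u.toLinearMap ∘ₗ Φ.flip (v q) := by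
        apply hE.1
        ext m
        change Φ (T (AdicCompletion.of I M m)) q = u (Φ (AdicCompletion.of I M m) (v q))
        rw [hT, hΦ, hΦ, hΨt]
        simp
      exact LinearMap.congr_fun this n

/-- Uniqueness principle: two families of maps `N → Y` that agree on the image of `A` and satisfy
the same rule for `t` are equal. The rule may change the index by a surjection `v`, so that the
`j`-th power of `t` can be removed by going to an index `p` with `v^[j] p = q`. -/
theorem IsCompletedLocalization.ext {R A N : Type} [CommRing R] [AddCommGroup A] [Module R A]
    [AddCommGroup N] [Module R N] {I : Ideal R} {L : A →ₗ[R] A} {ι : A →ₗ[R] N} {t : N ≃ₗ[R] N}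
    (h : IsCompletedLocalization I L ι t) {Q Y : Type} [AddCommGroup Y] [Module R Y]
    [IsHausdorff I Y] (F G : Q → N →ₗ[R] Y) (u : Y ≃ₗ[R] Y) (v : Q → Q)
    (hv : Function.Surjective v) (hι : ∀ q a, F q (ι a) = G q (ι a))
    (hF : ∀ q n, F q (t n) = u (F (v q) n)) (hG : ∀ q n, G q (t n) = u (G (v q) n)) (q : Q) (n : N) :
    F q n = G q n := by
  have hpow : ∀ (H : Q → N →ₗ[R] Y), (∀ q n, H q (t n) = u (H (v q) n)) →
      ∀ (j : ℕ) q n, H q ((t ^ j) n) = (u ^ j) (H (v^[j] q) n) := by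
    intro H hH j
    induction j with
    | zero => intro q n; rfl
    | succ j ih =>
      intro q n
      rw [pow_succ, LinearEquiv.mul_apply, ih, hH, pow_succ, LinearEquiv.mul_apply,
        Function.iterate_succ_apply']
  rw [← sub_eq_zero]
  refine eq_zero_of_forall_mem I fun k => ?_
  obtain ⟨j, a, hja⟩ := h.dense k n
  obtain ⟨p, rfl⟩ := hv.iterate j q
  have h1 := apply_mem_pow_smul_top (F p - G p) hja
  -- The values at `n` with index `v^[j] p` are determined by the values at `t ^ j n` with index `p`.
  have h2 : (F p - G p) ((t ^ j) n - ι a) = (u ^ j) (F (v^[j] p) n - G (v^[j] p) n) := by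
    rw [map_sub, LinearMap.sub_apply, LinearMap.sub_apply, hι, sub_self, sub_zero, hpow F hF,
      hpow G hG, map_sub]
  rw [h2] at h1
  simpa using apply_mem_pow_smul_top (u ^ j).symm.toLinearMap h1

/-- An endomorphism of an `I`-adically complete module that is the identity modulo `I` is
bijective. -/
theorem bijective_of_sub_mem {R N : Type} [CommRing R] (I : Ideal R) [AddCommGroup N] [Module R N]
    [IsAdicComplete I N] (f : N →ₗ[R] N) (hf : ∀ n, f n - n ∈ (I • ⊤ : Submodule R N)) :
    Function.Bijective f := by
  have hf' : ∀ (k : ℕ) n, n ∈ (I ^ k • ⊤ : Submodule R N) →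
      f n - n ∈ (I ^ (k + 1) • ⊤ : Submodule R N) := by
    intro k n hn
    let d : N →ₗ[R] N := f - LinearMap.id
    have h1 : d n ∈ Submodule.map d (I ^ k • ⊤) := Submodule.mem_map_of_mem hn
    rw [Submodule.map_smul''] at h1
    rw [pow_succ, mul_smul]
    refine Submodule.smul_mono le_rfl ?_ h1
    rintro _ ⟨x, -, rfl⟩
    exact hf x
  constructor
  · rw [injective_iff_map_eq_zero]
    intro n hn
    refine eq_zero_of_forall_mem I fun k => ?_
    induction k with
    | zero => simp
    | succ k ih => simpa [hn] using hf' k n ih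
  · intro n
    -- Successive approximation: `x (k + 1) = x k + (n - f (x k))` converges to a preimage of `n`.
    let x : ℕ → N := fun k => Nat.rec 0 (fun _ y => y + (n - f y)) k
    have hx : ∀ k, x (k + 1) = x k + (n - f (x k)) := fun k => rfl
    have hxk : ∀ k, n - f (x k) ∈ (I ^ k • ⊤ : Submodule R N) := by
      intro k
      induction k with
      | zero => simp
      | succ k ih =>
        have := Submodule.neg_mem _ (hf' k _ ih)
        rw [hx, map_add]
        convert this using 1
        abel
    obtain ⟨y, hy⟩ := IsPrecomplete.prec (inferInstance : IsPrecomplete I N) (f := x) (by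
      intro a b hab
      induction b, hab using Nat.le_induction with
      | base => rfl
      | succ b hab ih =>
        refine ih.trans ?_
        rw [SModEq.comm, SModEq.sub_mem, hx, add_sub_cancel_left]
        exact Submodule.smul_mono_left (Ideal.pow_le_pow_right hab) (hxk b))
    refine ⟨y, (sub_eq_zero.1 (eq_zero_of_forall_mem I fun k => ?_)).symm⟩
    have h1 := Submodule.add_mem _ (hxk k) (apply_mem_pow_smul_top f (SModEq.sub_mem.1 (hy k)))
    rw [map_sub] at h1
    simpa using h1

/-! ### The ring structure on the completed localization -/

/-- `Φ` extends the right action `σ` of `A` on `Y` to `N`: it restricts to `σ` along `ι`, and `t n`,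
which stands for the product of `s` and `n`, acts as `s` followed by `n`. No multiplication on `N`
is presupposed. -/
structure IsExtendedAction {R A N Y : Type} [CommRing R] [Ring A] [Algebra R A] [AddCommGroup N]
    [Module R N] [AddCommGroup Y] [Module R Y] (s : A) (ι : A →ₗ[R] N) (t : N ≃ₗ[R] N)
    (σ : A → Y → Y) (Φ : N →ₗ[R] Y →ₗ[R] Y) : Prop where
  apply_ι : ∀ a y, Φ (ι a) y = σ a y
  apply_t : ∀ n y, Φ (t n) y = Φ n (σ s y)

section

variable {R A N : Type} [CommRing R] {I : Ideal R} [Ring A] [Algebra R A] [AddCommGroup N]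
  [Module R N] {s : A} {ι : A →ₗ[R] N} {t : N ≃ₗ[R] N}

/-- Right multiplication of `A` on itself commutes with left multiplication by `s`, so it extends to
a right action `ρ` of `A` on the completed localization `N`. -/
theorem exists_rightAction (h : IsCompletedLocalization I (LinearMap.mulLeft R s) ι t) :
    ∃ ρ : A →ₗ[R] N →ₗ[R] N, (∀ a b, ρ a (ι b) = ι (b * a)) ∧ (∀ a n, ρ a (t n) = t (ρ a n)) ∧
      (∀ n, ρ 1 n = n) ∧ ∀ a b n, ρ (a * b) n = ρ b (ρ a n) := by
  have := h.complete
  obtain ⟨Φ, hΦ, hΦt⟩ := h.lift A N ((LinearMap.mul R A).compr₂ ι) t (LinearEquiv.refl R A) (by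
    intro a q
    simp [h.comm, mul_assoc])
  have hρ : ∀ a b, Φ.flip a (ι b) = ι (b * a) := fun a b => by simp [hΦ]
  have hρt : ∀ a n, Φ.flip a (t n) = t (Φ.flip a n) := fun a n => by simp [hΦt]
  refine ⟨Φ.flip, hρ, hρt, fun n => ?_, fun a b n => ?_⟩
  · exact h.ext (Q := Unit) (fun _ => Φ.flip 1) (fun _ => LinearMap.id) t id
      Function.surjective_id (fun _ a => by simp [hρ]) (fun _ n => hρt _ _) (fun _ n => rfl) () n
  · refine h.ext (Q := Unit) (fun _ => Φ.flip (a * b)) (fun _ => Φ.flip b ∘ₗ Φ.flip a) t id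
      Function.surjective_id (fun _ c => ?_) (fun _ n => hρt _ _) (fun _ n => ?_) () n
    · rw [LinearMap.comp_apply, hρ, hρ, hρ, mul_assoc]
    · rw [LinearMap.comp_apply, hρt, hρt]
      rfl

/-- Right multiplication by `s` is bijective on `N`: the commutators `a * s - s * a` lie in `I A`, so
it agrees modulo `I` with the automorphism `t`. -/
theorem rightAction_bijective (h : IsCompletedLocalization I (LinearMap.mulLeft R s) ι t)
    (hs : ∀ a : A, a * s - s * a ∈ (I • ⊤ : Submodule R A)) (ρs : N →ₗ[R] N)
    (hρ : ∀ b, ρs (ι b) = ι (b * s)) (hρt : ∀ n, ρs (t n) = t (ρs n)) :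
    Function.Bijective ρs := by
  have := h.complete
  -- The difference `d` commutes with `t`, so it suffices to know it on the dense image of `A`.
  let d : N →ₗ[R] N := ρs - t.toLinearMap
  have hd : ∀ n, d n ∈ (I • ⊤ : Submodule R N) := by
    intro n
    obtain ⟨j, a, hja⟩ := h.dense 1 n
    have hdt : ∀ (j : ℕ) n, d ((t ^ j) n) = (t ^ j) (d n) := by
      intro j
      induction j with
      | zero => intro n; rfl
      | succ j ih =>
        intro n
        have : d (t n) = t (d n) := by simp [d, hρt]
        rw [pow_succ, LinearEquiv.mul_apply, LinearEquiv.mul_apply, ih, this]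
    have h1 : d (ι a) ∈ (I ^ 1 • ⊤ : Submodule R N) := by
      have : d (ι a) = ι (a * s - s * a) := by simp [d, hρ, h.comm]
      rw [this]
      exact apply_mem_pow_smul_top ι (by rw [pow_one]; exact hs a)
    have h2 := Submodule.add_mem _ (apply_mem_pow_smul_top d hja) h1
    rw [map_sub, sub_add_cancel, hdt] at h2
    simpa using apply_mem_pow_smul_top (t ^ j).symm.toLinearMap h2
  have h3 := bijective_of_sub_mem I (t.symm.toLinearMap ∘ₗ ρs) (by
    intro n
    have h1 : t.symm (d n) ∈ (I ^ 1 • ⊤ : Submodule R N) :=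
      apply_mem_pow_smul_top t.symm.toLinearMap (by rw [pow_one]; exact hd n)
    rw [pow_one] at h1
    simpa [d] using h1)
  have h4 := t.bijective.comp h3
  convert h4 using 1
  funext n
  simp

/-- A right action of `A` on a complete module `Y` on which `s` acts bijectively extends to `N`. -/
theorem exists_extendedAction (h : IsCompletedLocalization I (LinearMap.mulLeft R s) ι t)
    {Y : Type} [AddCommGroup Y] [Module R Y] [IsAdicComplete I Y] (σ : A →ₗ[R] Y →ₗ[R] Y)
    (hσ : ∀ a b y, σ (a * b) y = σ b (σ a y)) (hσs : Function.Bijective (σ s)) :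
    ∃ Φ : N →ₗ[R] Y →ₗ[R] Y, IsExtendedAction s ι t (fun a => σ a) Φ := by
  obtain ⟨Φ, hΦ, hΦt⟩ := h.lift Y Y σ (LinearEquiv.refl R Y) (LinearEquiv.ofBijective (σ s) hσs)
    (fun a y => by simp [hσ])
  exact ⟨Φ, hΦ, hΦt⟩

/-- Let `β` be the extension of the right action of `A` on `N` itself. For every extended action `Φ`
on some `Y`, the element `β n' n`, which is to be the product `n * n'`, acts as `n` followed by `n'`.
The case `Y = N` is associativity. -/
theorem extendedAction_mul (h : IsCompletedLocalization I (LinearMap.mulLeft R s) ι t)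
    {ρ : A →ₗ[R] N →ₗ[R] N} (hρ : ∀ a b, ρ a (ι b) = ι (b * a))
    (hρt : ∀ a n, ρ a (t n) = t (ρ a n)) (hρs : Function.Bijective (ρ s))
    {β : N →ₗ[R] N →ₗ[R] N} (hβ : IsExtendedAction s ι t (fun a => ρ a) β)
    {Y : Type} [AddCommGroup Y] [Module R Y] [IsAdicComplete I Y] {σ : A →ₗ[R] Y →ₗ[R] Y}
    (hσ : ∀ a b y, σ (a * b) y = σ b (σ a y)) (hσs : Function.Bijective (σ s))
    {Φ : N →ₗ[R] Y →ₗ[R] Y} (hΦ : IsExtendedAction s ι t (fun a => σ a) Φ) (n n' : N) (y : Y) :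
    Φ (β n' n) y = Φ n' (Φ n y) := by
  have step : ∀ a n y, Φ (ρ a n) y = σ a (Φ n y) := by
    intro a n y
    refine h.ext (fun y => Φ.flip y ∘ₗ ρ a) (fun y => σ a ∘ₗ Φ.flip y) (LinearEquiv.refl R Y) (σ s)
      hσs.2 (fun y b => ?_) (fun y n => ?_) (fun y n => ?_) y n
    · simp [hρ, hΦ.apply_ι, hσ]
    · simp [hρt, hΦ.apply_t]
    · simp [hΦ.apply_t]
  refine h.ext (Q := N × Y) (fun q => Φ.flip q.2 ∘ₗ β.flip q.1) (fun q => Φ.flip (Φ q.1 q.2))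
    (LinearEquiv.refl R Y) (fun q => (ρ s q.1, q.2)) ?_ (fun q b => ?_) (fun q n => ?_)
    (fun q n => ?_) (n, y) n'
  · rintro ⟨n, y⟩
    obtain ⟨m, rfl⟩ := hρs.2 n
    exact ⟨(m, y), rfl⟩
  · simp [hβ.apply_ι, step, hΦ.apply_ι]
  · simp [hβ.apply_t]
  · simp [hΦ.apply_t, step]

end

/-- The completed localization of a flat `R`-algebra `A` at an element `s` that is central modulo
`I`, with its universal property among all `I`-adically complete `R`-algebras in which `s` becomes
invertible. -/
theorem exists_localized_algebra {R A : Type} [CommRing R] [IsNoetherianRing R] (I : Ideal R)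
    [Ring A] [Algebra R A] [Module.Flat R A] (s : A)
    (hs : ∀ a : A, a * s - s * a ∈ (I • ⊤ : Submodule R A)) :
    ∃ (N : Type) (_ : Ring N) (_ : Algebra R N) (g : A →ₐ[R] N),
      Module.Flat R N ∧ IsAdicComplete I N ∧ IsUnit (g s) ∧
      (∀ (k : ℕ) n, ∃ (j : ℕ) (a : A), g s ^ j * n - g a ∈ (I ^ k • ⊤ : Submodule R N)) ∧
      ∀ (X : Type) [Ring X] [Algebra R X] [IsAdicComplete I X] (f : A →ₐ[R] X), IsUnit (f s) →
        ∃! g' : N →ₐ[R] X, g'.comp g = f := by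
  obtain ⟨N, instN, instRN, ι, t, hflat, h⟩ :=
    exists_isCompletedLocalization I (LinearMap.mulLeft R s)
  have hcomplete := h.complete
  obtain ⟨ρ, hρ, hρt, hρ1, hρm⟩ := exists_rightAction h
  have hρs : Function.Bijective (ρ s) := rightAction_bijective h hs (ρ s) (hρ s) (hρt s)
  obtain ⟨β, hβ⟩ := exists_extendedAction h ρ hρm hρs
  have hβt : ∀ n m, β n (t m) = t (β n m) := by
    intro n m
    refine h.ext (fun m => β.flip (t m)) (fun m => t.toLinearMap ∘ₗ β.flip m)
      (LinearEquiv.refl R N) (ρ s) hρs.2 (fun m a => ?_) (fun m n => ?_) (fun m n => ?_) m n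
    · simp [hβ.apply_ι, hρt]
    · simp [hβ.apply_t, hρt]
    · simp [hβ.apply_t]
  have hβ1 : ∀ n, β n (ι 1) = n := by
    intro n
    refine h.ext (Q := Unit) (fun _ => β.flip (ι 1)) (fun _ => LinearMap.id) t id
      Function.surjective_id (fun _ a => ?_) (fun _ n => ?_) (fun _ n => rfl) () n
    · simp [hβ.apply_ι, hρ]
    · have : ρ s (ι 1) = t (ι 1) := by simp [hρ, h.comm]
      simp [hβ.apply_t, this, hβt]
  have h1β : ∀ n, β (ι 1) n = n := fun n => by rw [hβ.apply_ι, hρ1]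
  have hassoc : ∀ x y z, β z (β y x) = β (β z y) x := fun x y z =>
    (extendedAction_mul h hρ hρt hρs hβ hρm hρs hβ y z x).symm
  -- The product `x * y` is `y`, acting from the right, applied to `x`.
  let ring : Ring N :=
    { instN with
      mul := fun x y => β y x
      one := ι 1
      mul_assoc := hassoc
      one_mul := hβ1
      mul_one := h1β
      left_distrib := fun x y z => by
        change β (y + z) x = β y x + β z x
        rw [map_add, LinearMap.add_apply]
      right_distrib := fun x y z => map_add (β z) x y
      zero_mul := fun x => map_zero (β x)
      mul_zero := fun x => by
        change β 0 x = 0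
        rw [map_zero, LinearMap.zero_apply] }
  have hmul : ∀ x y : N, x * y = β y x := fun x y => rfl
  let alg : Algebra R N := Algebra.ofModule (fun r x y => map_smul (β y) r x)
    (fun r x y => by rw [hmul, hmul, map_smul, LinearMap.smul_apply])
  let g : A →ₐ[R] N := AlgHom.ofLinearMap ι rfl (fun a b => by rw [hmul, hβ.apply_ι, hρ])
  have hg : ∀ a, g a = ι a := fun a => rfl
  have hgs : ∀ n, g s * n = t n := by
    intro n
    have : ι s = t (ι 1) := by simp [h.comm]
    rw [hmul, hg, this, hβt, hβ1]
  refine ⟨N, ring, alg, g, hflat, hcomplete, ?_, fun k n => ?_, ?_⟩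
  -- The inverse of `g s` is `t⁻¹ 1`, because left multiplication by `g s` is `t`.
  · refine isUnit_iff_exists.2 ⟨t.symm 1, ?_, ?_⟩
    · rw [hgs, LinearEquiv.apply_symm_apply]
    · apply t.injective
      rw [hmul, ← hβt, LinearEquiv.apply_symm_apply, ← hmul, one_mul, ← hgs, mul_one]
  · obtain ⟨j, a, hja⟩ := h.dense k n
    have hj : ∀ j : ℕ, ∀ n, g s ^ j * n = (t ^ j) n := by
      intro j
      induction j with
      | zero => intro n; rw [pow_zero, one_mul]; rfl
      | succ j ih => intro n; rw [pow_succ, mul_assoc, ih, hgs]; rfl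
    exact ⟨j, a, by rw [hj]; exact hja⟩
  · intro X _ _ _ f hf
    -- `A` acts on `X` from the right through `f`. The extended action `Φ` of `N` is by maps that
    -- commute with left multiplications, so it is right multiplication by `Φ n 1`.
    let σ : A →ₗ[R] X →ₗ[R] X := (LinearMap.mul R X).flip ∘ₗ f.toLinearMap
    have hσ : ∀ a x, σ a x = x * f a := fun a x => rfl
    have hσm : ∀ a b x, σ (a * b) x = σ b (σ a x) := fun a b x => by
      rw [hσ, hσ, hσ, map_mul, mul_assoc]
    have hσs : Function.Bijective (σ s) := IsUnit.isUnit_iff_mulRight_bijective.1 hf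
    obtain ⟨Φ, hΦ⟩ := exists_extendedAction h σ hσm hσs
    have hΦmul : ∀ n x y, Φ n (x * y) = x * Φ n y := by
      intro n x y
      refine h.ext (Q := X × X) (fun q => Φ.flip (q.1 * q.2))
        (fun q => LinearMap.mulLeft R q.1 ∘ₗ Φ.flip q.2) (LinearEquiv.refl R X)
        (fun q => (q.1, σ s q.2)) ?_ (fun q a => ?_) (fun q n => ?_) (fun q n => ?_) (x, y) n
      · rintro ⟨x, y⟩
        obtain ⟨z, rfl⟩ := hσs.2 y
        exact ⟨(x, z), rfl⟩
      · simp [hΦ.apply_ι, hσ, mul_assoc]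
      · simp [hΦ.apply_t, hσ, mul_assoc]
      · simp [hΦ.apply_t]
    refine ⟨AlgHom.ofLinearMap (Φ.flip 1) ?_ ?_, ?_, ?_⟩
    · change Φ (ι 1) 1 = 1
      rw [hΦ.apply_ι]
      simp [hσ]
    · intro x y
      change Φ (β y x) 1 = Φ x 1 * Φ y 1
      rw [extendedAction_mul h hρ hρt hρs hβ hσm hσs hΦ, ← hΦmul, mul_one]
    · ext a
      change Φ (ι a) 1 = f a
      rw [hΦ.apply_ι]
      simp [hσ]
    · intro g' hg'
      ext n
      have hg'ι : ∀ a, g' (ι a) = f a := fun a => AlgHom.congr_fun hg' a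
      refine h.ext (Q := Unit) (fun _ => g'.toLinearMap) (fun _ => Φ.flip 1)
        (LinearEquiv.ofBijective (LinearMap.mulLeft R (f s))
          (IsUnit.isUnit_iff_mulLeft_bijective.1 hf)) id
        Function.surjective_id (fun _ a => ?_) (fun _ n => ?_) (fun _ n => ?_) () n
      · simp [hΦ.apply_ι, hσ, hg'ι]
      · change g' (t n) = f s * g' n
        rw [← hgs, map_mul, hg, hg'ι]
      · change Φ (t n) 1 = f s * Φ n 1
        rw [hΦ.apply_t, ← hΦmul, hσ, one_mul, mul_one]

/-! ### Reduction modulo the ideal -/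

/-- Units lift from `X / I X` to an `I`-adically complete algebra `X`. -/
theorem isUnit_of_isUnit_map {R X E : Type} [CommRing R] (I : Ideal R) [Ring X] [Algebra R X]
    [IsAdicComplete I X] [Ring E] (φ : X →+* E) (hφ : Function.Surjective φ)
    (hker : ∀ x, φ x = 0 → x ∈ (I • ⊤ : Submodule R X)) {x : X} (hx : IsUnit (φ x)) :
    IsUnit x := by
  obtain ⟨e, h1, h2⟩ := isUnit_iff_exists.1 hx
  obtain ⟨y, rfl⟩ := hφ e
  have hxy : x * y - 1 ∈ (I • ⊤ : Submodule R X) := hker _ (by simp [h1])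
  have hyx : y * x - 1 ∈ (I • ⊤ : Submodule R X) := hker _ (by simp [h2])
  have b1 : Function.Bijective (LinearMap.mulLeft R (x * y)) :=
    bijective_of_sub_mem I _ fun n => by
      have := apply_mem_pow_smul_top (k := 1) (LinearMap.mulRight R n)
        (by rw [pow_one]; exact hxy)
      simpa [sub_mul, mul_assoc] using this
  have b2 : Function.Bijective (LinearMap.mulRight R (y * x)) :=
    bijective_of_sub_mem I _ fun n => by
      have := apply_mem_pow_smul_top (k := 1) (LinearMap.mulLeft R n)
        (by rw [pow_one]; exact hyx)
      simpa [mul_sub, mul_assoc] using this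
  obtain ⟨u, hu⟩ := b1.2 1
  obtain ⟨v, hv⟩ := b2.2 1
  have huR : x * (y * u) = 1 := by rw [← mul_assoc]; exact hu
  have hvL : (v * y) * x = 1 := by rw [mul_assoc]; exact hv
  exact isUnit_iff_exists.2 ⟨y * u, huR, by rwa [← left_inv_eq_right_inv hvL huR]⟩

/-- A module killed by `I` is `I`-adically complete. -/
theorem isAdicComplete_of_smul_eq_zero {R X : Type} [CommRing R] (I : Ideal R) [AddCommGroup X]
    [Module R X] (h : ∀ r ∈ I, ∀ x : X, r • x = 0) : IsAdicComplete I X := by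
  have hbot : (I ^ 1 • ⊤ : Submodule R X) = ⊥ := by
    rw [pow_one, eq_bot_iff, Submodule.smul_le]
    exact fun r hr x _ => (Submodule.mem_bot R).2 (h r hr x)
  refine { haus' := fun x hx => ?_, prec' := fun f hf => ⟨f 1, fun n => ?_⟩ }
  · have := hx 1
    rwa [hbot, SModEq.bot] at this
  · rcases Nat.eq_zero_or_pos n with rfl | hn
    · simp
    · have h1 := hf hn
      rw [hbot, SModEq.bot] at h1
      rw [h1]

/-- Let `(R, 𝔪)` be a parameter `K`-algebra, `C` a commutative `K`-algebra,
`(A, π)` an associative `R`-deformation of `C`, `s ∈ C` and `C' := C[s⁻¹]`.  Then there exist an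
associative `R`-deformation `(A', π')` of `C'` and an `R`-algebra homomorphism `g : A → A'`
lifting `τ : C → C'`, which is universal: every `R`-algebra homomorphism `h : A → A''` to an
`R`-deformation of some `C''` lifting `τ' ∘ τ` factors uniquely through `g`. -/
theorem statement8
    (K : Type) [Field K]
    (R : Type) [CommRing R] [Algebra K R] [IsNoetherianRing R] [IsLocalRing R]
    (hRcomp : IsAdicComplete (IsLocalRing.maximalIdeal R) R)
    (hres : Function.Bijective (algebraMap K (R ⧸ IsLocalRing.maximalIdeal R)))
    (C : Type) [CommRing C] [Algebra K C]
    (D : AssocDeformation K R C)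
    (s : C)
    (C' : Type) [CommRing C'] [Algebra K C'] [Algebra C C'] [IsScalarTower K C C']
    [IsLocalization.Away s C'] :
    ∃ (D' : AssocDeformation K R C') (g : D.carrier →ₐ[R] D'.carrier),
      (∀ a : D.carrier, D'.aug (g a) = algebraMap C C' (D.aug a)) ∧
      ∀ (C'' : Type) [CommRing C''] [Algebra K C''] (τ' : C' →+* C'')
        (D'' : AssocDeformation K R C'') (h : D.carrier →ₐ[R] D''.carrier),
        (∀ a : D.carrier, D''.aug (h a) = τ' (algebraMap C C' (D.aug a))) →
        ∃! g' : D'.carrier →ₐ[R] D''.carrier, g'.comp g = h := by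
  obtain ⟨s₁, hs₁⟩ := D.surj s
  have := D.flat
  have := D.complete
  have hcomm : ∀ a : D.carrier, a * s₁ - s₁ * a ∈
      (IsLocalRing.maximalIdeal R • ⊤ : Submodule R D.carrier) := fun a =>
    (D.ker _).1 (by rw [map_sub, map_mul, map_mul, mul_comm, sub_self])
  obtain ⟨N, _, _, g, hflat, hcomplete, hunit, hdense, huniv⟩ :=
    exists_localized_algebra (IsLocalRing.maximalIdeal R) s₁ hcomm
  -- `R` acts on `C'` through its residue map `ρ : R → R/𝔪 ≅ K`.
  let e := RingEquiv.ofBijective (algebraMap K (R ⧸ IsLocalRing.maximalIdeal R)) hres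
  let ρ : R →+* K := e.symm.toRingHom.comp (Ideal.Quotient.mk (IsLocalRing.maximalIdeal R))
  have hρK : ∀ k, ρ (algebraMap K R k) = k := fun k => e.symm_apply_apply k
  have hρ𝔪 : ∀ r ∈ IsLocalRing.maximalIdeal R, ρ r = 0 := fun r hr => by
    change e.symm (Ideal.Quotient.mk _ r) = 0
    rw [Ideal.Quotient.eq_zero_iff_mem.2 hr, map_zero]
  have hρsub : ∀ r, r - algebraMap K R (ρ r) ∈ IsLocalRing.maximalIdeal R := fun r => by
    rw [← Ideal.Quotient.eq_zero_iff_mem, map_sub, sub_eq_zero]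
    exact (e.apply_symm_apply (Ideal.Quotient.mk _ r)).symm
  let algRC' : Algebra R C' := ((algebraMap K C').comp ρ).toAlgebra
  have hRC' : ∀ r, algebraMap R C' r = algebraMap K C' (ρ r) := fun r => rfl
  have hsmul : ∀ r ∈ IsLocalRing.maximalIdeal R, ∀ x : C', r • x = 0 := fun r hr x => by
    rw [Algebra.smul_def, hRC', hρ𝔪 r hr, map_zero, zero_mul]
  -- As `C'` is killed by `𝔪` it is complete, so the universal property of `N` yields the augmentation.
  have := isAdicComplete_of_smul_eq_zero _ hsmul
  have hbot : (IsLocalRing.maximalIdeal R • ⊤ : Submodule R C') = ⊥ := by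
    rw [eq_bot_iff, Submodule.smul_le]
    exact fun r hr x _ => (Submodule.mem_bot R).2 (hsmul r hr x)
  have hfR : ∀ r, algebraMap C C' (D.aug (algebraMap R D.carrier r)) = algebraMap R C' r := by
    intro r
    have h0 : D.aug (algebraMap R D.carrier (r - algebraMap K R (ρ r))) = 0 := by
      rw [D.ker, Algebra.algebraMap_eq_smul_one]
      exact Submodule.smul_mem_smul (hρsub r) trivial
    rw [map_sub, map_sub, sub_eq_zero, ← IsScalarTower.algebraMap_apply, AlgHom.commutes] at h0
    rw [h0, hRC', ← IsScalarTower.algebraMap_apply]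
  let f : D.carrier →ₐ[R] C' :=
    { (algebraMap C C').comp D.aug.toRingHom with commutes' := hfR }
  have hf : ∀ a, f a = algebraMap C C' (D.aug a) := fun a => rfl
  have hfs : IsUnit (f s₁) := by
    rw [hf, hs₁]
    exact IsLocalization.Away.algebraMap_isUnit s
  obtain ⟨p, hp, -⟩ := huniv C' f hfs
  have hpg : ∀ a, p (g a) = algebraMap C C' (D.aug a) := fun a => AlgHom.congr_fun hp a
  let algKN : Algebra K N := Algebra.compHom N (algebraMap K R)
  have hKN : ∀ k, algebraMap K N k = algebraMap R N (algebraMap K R k) := fun k => rfl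
  have htower : IsScalarTower K R N := IsScalarTower.of_algebraMap_eq hKN
  let π : N →ₐ[K] C' :=
    { p.toRingHom with
      commutes' := fun k => by
        change p (algebraMap K N k) = _
        rw [hKN, AlgHom.commutes, hRC', hρK] }
  have hπ : ∀ n, π n = p n := fun n => rfl
  obtain ⟨v, hv, hv'⟩ := isUnit_iff_exists.1 hunit
  have hvp : ∀ k : ℕ, v ^ k * g s₁ ^ k = 1 := fun k => by
    rw [← (show Commute v (g s₁) from hv'.trans hv.symm).mul_pow, hv', one_pow]
  -- `𝔪 N` is stable under left multiplication by the inverse `v` of `g s₁`.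
  have hcancel : ∀ (k : ℕ) (n : N),
      g s₁ ^ k * n ∈ (IsLocalRing.maximalIdeal R • ⊤ : Submodule R N) →
      n ∈ (IsLocalRing.maximalIdeal R • ⊤ : Submodule R N) := fun k n hn => by
    have := apply_mem_pow_smul_top (k := 1) (LinearMap.mulLeft R (v ^ k)) (by rwa [pow_one])
    simpa [← mul_assoc, hvp] using this
  have hπker𝔪 : ∀ n ∈ (IsLocalRing.maximalIdeal R • ⊤ : Submodule R N), p n = 0 := fun n hn => by
    have := apply_mem_pow_smul_top (k := 1) p.toLinearMap (by rwa [pow_one])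
    rw [pow_one, hbot] at this
    exact (Submodule.mem_bot R).1 this
  have hsurj : Function.Surjective π := by
    intro c'
    obtain ⟨k, c, hc⟩ := IsLocalization.Away.surj s c'
    obtain ⟨a, rfl⟩ := D.surj c
    refine ⟨v ^ k * g a, ?_⟩
    rw [hπ, map_mul, hpg, ← hc]
    have h1 := congrArg p (hvp k)
    rw [map_mul, map_pow p (g s₁), hpg, hs₁, map_one] at h1
    rw [mul_comm c', ← mul_assoc, h1, one_mul]
  -- If `π n = 0`, approximate `g s₁ ^ j * n` modulo `𝔪 N` by some `g a`. Then `a` dies in `C'`, so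
  -- `s₁ ^ k * a ∈ 𝔪 A` for some `k`, and cancelling powers of `g s₁` gives `n ∈ 𝔪 N`.
  have hker : ∀ n : N, π n = 0 ↔ n ∈ (IsLocalRing.maximalIdeal R • ⊤ : Submodule R N) := by
    intro n
    refine ⟨fun hn => ?_, hπker𝔪 n⟩
    rw [hπ] at hn
    obtain ⟨j, a, hja⟩ := hdense 1 n
    rw [pow_one] at hja
    have h0 : algebraMap C C' (D.aug a) = 0 := by
      have := hπker𝔪 _ hja
      rwa [map_sub, map_mul, hn, mul_zero, zero_sub, neg_eq_zero, hpg] at this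
    obtain ⟨⟨_, k, rfl⟩, hk⟩ := (IsLocalization.map_eq_zero_iff (Submonoid.powers s) C' _).1 h0
    have h1 : s₁ ^ k * a ∈ (IsLocalRing.maximalIdeal R • ⊤ : Submodule R D.carrier) :=
      (D.ker _).1 (by rw [map_mul, map_pow, hs₁]; exact hk)
    have h2 := apply_mem_pow_smul_top (k := 1) g.toLinearMap (by rwa [pow_one])
    rw [AlgHom.toLinearMap_apply, map_mul, map_pow, pow_one] at h2
    have h3 := Submodule.add_mem _ hja (hcancel k _ h2)
    rw [sub_add_cancel] at h3
    exact hcancel j n h3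
  refine ⟨⟨N, hflat, hcomplete, π, hsurj, hker⟩, g, hpg, ?_⟩
  intro C'' _ _ τ' D'' h hh
  have := D''.complete
  refine huniv D''.carrier h ?_
  refine isUnit_of_isUnit_map (IsLocalRing.maximalIdeal R) D''.aug.toRingHom D''.surj
    (fun x hx => (D''.ker x).1 hx) ?_
  change IsUnit (D''.aug (h s₁))
  rw [hh, hs₁]
  exact (IsLocalization.Away.algebraMap_isUnit s).map τ'
end
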